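/- Let ρ : ℝ^n → (0,∞) be a continuous positive function for which there exist 0 < ε ≤ 1 and 0 < R_ε ≤ 1/(2(1−ε)) (with no upper bound condition on R_ε in the case ε = 1) such that ρ(x) ≤ R_ε⟨x⟩^{1−ε} for all x ∈ ℝ^n. If ω ⊂ ℝ^n is a measurable subset which is γ-thick with respect to the density ρ with 1 − 6^{−n} < γ ≤ 1, then there exist positive constants κ > 0 and C̃ > 0 (depending on n, R_ε, γ, ε) and a positive constant κ̃ > 1 depending only on the dimension n such that for every integer N ≥ 1 and every f ∈ E_N, ‖f‖_{L²(ℝ^n)} ≤ κ (κ̃/γ)^{C̃ N^{1−ε/2}} ‖f‖_{L²(ω)}. -/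

import Mathlib

open MeasureTheory
open scoped BigOperators ENNReal NNReal

noncomputable section

abbrev En (n : ℕ) := EuclideanSpace ℝ (Fin n)

/-- One-dimensional Hermite function. -/
def hermite1 (k : ℕ) (x : ℝ) : ℝ :=
  (-1 : ℝ) ^ k * ((2 ^ k * (k.factorial : ℝ) * Real.sqrt Real.pi) ^ (-(1/2 : ℝ))) *
    Real.exp (x ^ 2 / 2) * iteratedDeriv k (fun y => Real.exp (-y ^ 2)) x

/-- Tensorized Hermite function on ℝⁿ. -/
def hermiteFun (n : ℕ) (α : Fin n → ℕ) (x : En n) : ℂ :=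
  ∏ j, (hermite1 (α j) (x j) : ℂ)

/-- The span E_N of Hermite functions with |α| ≤ N. -/
def hermiteSpan (n N : ℕ) : Submodule ℂ (En n → ℂ) :=
  Submodule.span ℂ {g | ∃ α : Fin n → ℕ, (∑ j, α j) ≤ N ∧ g = hermiteFun n α}

/-- Japanese bracket ⟨x⟩. -/
def jap (n : ℕ) (x : En n) : ℝ := Real.sqrt (1 + ‖x‖ ^ 2)

/-- γ-thickness with respect to a density ρ. -/
def ThickWith (n : ℕ) (γ : ℝ) (ρ : En n → ℝ) (ω : Set (En n)) : Prop :=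
  ∀ x : En n,
    ENNReal.ofReal γ * volume (Metric.ball x (ρ x)) ≤ volume (ω ∩ Metric.ball x (ρ x))

/-- L² norm on ℝⁿ. -/
def L2norm (n : ℕ) (f : En n → ℂ) : ℝ := Real.sqrt (∫ x, ‖f x‖ ^ 2)

/-- L² norm on a subset ω. -/
def L2normOn (n : ℕ) (ω : Set (En n)) (f : En n → ℂ) : ℝ :=
  Real.sqrt (∫ x in ω, ‖f x‖ ^ 2)


/-! ### One-dimensional Remez-type estimate -/

lemma meas_small_factor (w : ℂ) (δ : ℝ) (hδ : 0 < δ) :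
    volume ({t : ℝ | ‖1 - (t : ℂ) * w‖ < δ} ∩ Set.Icc (0 : ℝ) 1) ≤ ENNReal.ofReal (4 * δ) := by
  by_cases hw : 1 / 2 ≤ ‖w‖
  · refine (Real.volume_le_diam _).trans ?_
    refine Metric.ediam_le ?_
    intro a ha b hb
    rw [edist_dist]
    apply ENNReal.ofReal_le_ofReal
    rw [Real.dist_eq]
    have h1 : ‖(1 - (b : ℂ) * w) - (1 - (a : ℂ) * w)‖ ≤ δ + δ :=
      (norm_sub_le _ _).trans (add_le_add hb.1.le ha.1.le)
    have h2 : (1 - (b : ℂ) * w) - (1 - (a : ℂ) * w) = ((a - b : ℝ) : ℂ) * w := by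
      push_cast; ring
    rw [h2, norm_mul, Complex.norm_real, Real.norm_eq_abs] at h1
    nlinarith [abs_nonneg (a - b)]
  · push Not at hw
    by_cases hd : 1 / 2 ≤ δ
    · calc _ ≤ volume (Set.Icc (0 : ℝ) 1) := measure_mono Set.inter_subset_right
        _ = ENNReal.ofReal 1 := by simp
        _ ≤ _ := ENNReal.ofReal_le_ofReal (by linarith)
    · push Not at hd
      have : {t : ℝ | ‖1 - (t : ℂ) * w‖ < δ} ∩ Set.Icc (0 : ℝ) 1 = ∅ := by
        ext t
        simp only [Set.mem_inter_iff, Set.mem_ofPred_eq, Set.mem_Icc, Set.mem_empty_iff_false,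
          iff_false, not_and]
        intro h ht0 ht1
        have h3 : ‖(1 : ℂ)‖ ≤ ‖1 - (t : ℂ) * w‖ + ‖(t : ℂ) * w‖ := by
          simpa using norm_add_le (1 - (t : ℂ) * w) ((t : ℂ) * w)
        rw [norm_one, norm_mul, Complex.norm_real, Real.norm_eq_abs, abs_of_nonneg ht0] at h3
        have := mul_le_of_le_one_left (norm_nonneg w) ht1
        linarith
      rw [this]; simp

/-- Dyadic counting function replacing the negative part of the logarithm. -/
def dya (w : ℂ) (t : ℝ) : ℝ≥0∞ :=
  ∑' i : ℕ, Set.indicator {t : ℝ | ‖1 - (t : ℂ) * w‖ < (1 / 2 : ℝ) ^ (i + 1)} (fun _ => 1) t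

lemma measurableSet_small (w : ℂ) (δ : ℝ) : MeasurableSet {t : ℝ | ‖1 - (t : ℂ) * w‖ < δ} :=
  (isOpen_lt (by fun_prop) continuous_const).measurableSet

lemma measurable_dya (w : ℂ) : Measurable (dya w) := by
  unfold dya
  exact Measurable.tsum fun i => measurable_const.indicator (measurableSet_small w _)

lemma lintegral_dya (w : ℂ) : ∫⁻ t in Set.Icc (0 : ℝ) 1, dya w t ≤ 4 := by
  unfold dya
  rw [lintegral_tsum fun i => (measurable_const.indicator (measurableSet_small w _)).aemeasurable]
  calc _ ≤ ∑' i : ℕ, (4 : ℝ≥0∞) * (2⁻¹ : ℝ≥0∞) ^ (i + 1) := by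
        refine ENNReal.tsum_le_tsum fun i => ?_
        rw [lintegral_indicator (measurableSet_small w _), setLIntegral_const, one_mul,
          Measure.restrict_apply (measurableSet_small w _)]
        refine (meas_small_factor w _ (by positivity)).trans (le_of_eq ?_)
        rw [ENNReal.ofReal_mul (by norm_num), ENNReal.ofReal_pow (by norm_num)]
        congr 1
        · norm_num
        · congr 1
          rw [one_div, ENNReal.ofReal_inv_of_pos (by norm_num)]; norm_num
    _ = 4 := by
        rw [ENNReal.tsum_mul_left]
        simp only [pow_succ']
        rw [ENNReal.tsum_mul_left, ENNReal.tsum_geometric, ENNReal.one_sub_inv_two, inv_inv,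
          ENNReal.inv_mul_cancel (by norm_num) (by norm_num), mul_one]

lemma le_of_dya (w : ℂ) (t : ℝ) (h : dya w t ≠ ∞) :
    (2 : ℝ) ^ (-((dya w t).toReal + 1)) ≤ ‖1 - (t : ℂ) * w‖ := by
  by_cases h0 : (1 / 2 : ℝ) ≤ ‖1 - (t : ℂ) * w‖
  · refine le_trans ?_ h0
    have : (1 / 2 : ℝ) = 2 ^ (-1 : ℝ) := by rw [Real.rpow_neg_one]; norm_num
    rw [this]
    apply Real.rpow_le_rpow_of_exponent_le (by norm_num)
    have := ENNReal.toReal_nonneg (a := dya w t)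
    linarith
  · push Not at h0
    -- a finite count
    have hk : ∀ k : ℕ, ‖1 - (t : ℂ) * w‖ < (1 / 2 : ℝ) ^ k → (k : ℝ≥0∞) ≤ dya w t := by
      intro k hk
      calc (k : ℝ≥0∞) = ∑ i ∈ Finset.range k, (1 : ℝ≥0∞) := by simp
        _ ≤ ∑ i ∈ Finset.range k,
            Set.indicator {t : ℝ | ‖1 - (t : ℂ) * w‖ < (1 / 2 : ℝ) ^ (i + 1)} (fun _ => 1) t := by
          refine Finset.sum_le_sum fun i hi => ?_
          rw [Set.indicator_of_mem]
          refine hk.trans_le ?_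
          exact pow_le_pow_of_le_one (by norm_num) (by norm_num) (by
            have := Finset.mem_range.1 hi; omega)
        _ ≤ _ := ENNReal.sum_le_tsum _
    by_contra hcon
    push Not at hcon
    obtain ⟨k, hk1⟩ : ∃ k : ℕ, (dya w t).toReal < k ∧ (k : ℝ) ≤ (dya w t).toReal + 1 :=
      ⟨⌊(dya w t).toReal⌋₊ + 1, by
        push_cast; exact Nat.lt_floor_add_one _, by
        push_cast
        linarith [Nat.floor_le (ENNReal.toReal_nonneg (a := dya w t))]⟩
    have h4 : ‖1 - (t : ℂ) * w‖ < (1 / 2 : ℝ) ^ k := by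
      refine hcon.trans_le ?_
      have : (1 / 2 : ℝ) ^ k = 2 ^ (-(k : ℝ)) := by
        rw [Real.rpow_neg (by norm_num), Real.rpow_natCast]; simp
      rw [this]
      apply Real.rpow_le_rpow_of_exponent_le (by norm_num)
      linarith [hk1.2]
    have h5 := hk k h4
    have h6 := ENNReal.toReal_mono h h5
    simp at h6
    linarith [hk1.1]

lemma prod_ge_of_dya (s : Multiset ℂ) (t : ℝ) (h : (s.map fun w => dya w t).sum ≠ ∞) :
    (2 : ℝ) ^ (-(((s.map fun w => dya w t).sum).toReal + s.card)) ≤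
      (s.map fun w => ‖1 - (t : ℂ) * w‖).prod := by
  induction s using Multiset.induction_on with
  | empty => simp
  | cons a s ih =>
    simp only [Multiset.map_cons, Multiset.sum_cons, Multiset.prod_cons, Multiset.card_cons] at h ⊢
    have h1 : dya a t ≠ ∞ := fun h' => h (by simp [h'])
    have h2 : (s.map fun w => dya w t).sum ≠ ∞ := fun h' => h (by simp [h'])
    rw [ENNReal.toReal_add h1 h2]
    have : (2 : ℝ) ^ (-((dya a t).toReal + (s.map fun w => dya w t).sum.toReal +
        ((s.card + 1 : ℕ) : ℝ))) = 2 ^ (-((dya a t).toReal + 1)) *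
        2 ^ (-(((s.map fun w => dya w t).sum).toReal + s.card)) := by
      rw [← Real.rpow_add (by norm_num)]
      congr 1; push_cast; ring
    rw [this]
    exact mul_le_mul (le_of_dya a t h1) (ih h2) (by positivity) (norm_nonneg _)

lemma measurable_sum_dya (s : Multiset ℂ) : Measurable fun t => (s.map fun w => dya w t).sum := by
  induction s using Multiset.induction_on with
  | empty => simp
  | cons a s ih =>
    simp only [Multiset.map_cons, Multiset.sum_cons]
    exact (measurable_dya a).add ih

lemma lintegral_sum_dya (s : Multiset ℂ) :
    ∫⁻ t in Set.Icc (0 : ℝ) 1, (s.map fun w => dya w t).sum ≤ 4 * s.card := by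
  induction s using Multiset.induction_on with
  | empty => simp
  | cons a s ih =>
    simp only [Multiset.map_cons, Multiset.sum_cons, Multiset.card_cons]
    rw [lintegral_add_left (measurable_dya a)]
    push_cast
    rw [mul_add, mul_one, add_comm]
    exact add_le_add ih (lintegral_dya a)

lemma remez_aux (T : Polynomial ℝ) (h0 : T.eval 0 ≠ 0) (t : ℝ) :
    |T.eval t| = |T.eval 0| *
      (((T.map (algebraMap ℝ ℂ)).roots.map fun z => z⁻¹).map fun w => ‖1 - (t : ℂ) * w‖).prod := by
  set Tc := T.map (algebraMap ℝ ℂ) with hTc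
  have hs : Tc.Splits := IsAlgClosed.splits Tc
  have hev : ∀ s : ℝ, |T.eval s| = ‖Tc.eval (s : ℂ)‖ := by
    intro s
    have : Tc.eval (s : ℂ) = ((T.eval s : ℝ) : ℂ) := by
      rw [hTc]; exact Polynomial.eval_map_apply (algebraMap ℝ ℂ) s
    rw [this, Complex.norm_real, Real.norm_eq_abs]
  have hroot : ∀ z ∈ Tc.roots, z ≠ 0 := by
    intro z hz hz0
    have h1 := (Polynomial.mem_roots'.1 hz).2
    rw [hz0, Polynomial.IsRoot] at h1
    have h2 := hev 0
    rw [Complex.ofReal_zero, h1, norm_zero] at h2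
    exact h0 (abs_eq_zero.1 h2)
  rw [hev, hev, hs.eval_eq_prod_roots, hs.eval_eq_prod_roots, norm_mul, norm_mul, mul_assoc]
  congr 1
  generalize Tc.roots = s at hroot
  induction s using Multiset.induction_on with
  | empty => simp
  | cons a s ih =>
    simp only [Multiset.map_cons, Multiset.prod_cons, norm_mul]
    rw [ih fun z hz => hroot z (Multiset.mem_cons_of_mem hz)]
    have ha := hroot a (Multiset.mem_cons_self a s)
    have : (t : ℂ) - a = (0 - a) * (1 - t * a⁻¹) := by field_simp; ring
    rw [Complex.ofReal_zero, this, norm_mul]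
    ring

/-- Remez-type estimate. -/
lemma remez (T : Polynomial ℝ) (m : ℕ) (hm : T.natDegree ≤ m) (K : ℝ) (hK : 0 < K) :
    (volume.restrict (Set.Icc (0 : ℝ) 1)) {t : ℝ | |T.eval t| < ((2 : ℝ) ^ (-(K + 1))) ^ m * |T.eval 0|}
      ≤ ENNReal.ofReal (4 / K) := by
  by_cases h0 : T.eval 0 = 0
  · have : {t : ℝ | |T.eval t| < ((2 : ℝ) ^ (-(K + 1))) ^ m * |T.eval 0|} = ∅ := by
      ext t; simp [h0]
    rw [this]; simp
  set s := ((T.map (algebraMap ℝ ℂ)).roots.map fun z => z⁻¹) with hs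
  have hcard : s.card ≤ m := by
    rw [hs, Multiset.card_map]
    exact ((Polynomial.card_roots' _).trans Polynomial.natDegree_map_le).trans hm
  have hη0 : (0 : ℝ) < (2 : ℝ) ^ (-(K + 1)) := by positivity
  have hη1 : (2 : ℝ) ^ (-(K + 1)) ≤ 1 :=
    Real.rpow_le_one_of_one_le_of_nonpos (by norm_num) (by linarith)
  by_cases hd : s.card = 0
  · have : {t : ℝ | |T.eval t| < ((2 : ℝ) ^ (-(K + 1))) ^ m * |T.eval 0|} = ∅ := by
      ext t
      simp only [Set.mem_ofPred_eq, Set.mem_empty_iff_false, iff_false, not_lt]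
      rw [remez_aux T h0 t, ← hs, Multiset.card_eq_zero.1 hd]
      simp only [Multiset.map_zero, Multiset.prod_zero, mul_one]
      exact mul_le_of_le_one_left (abs_nonneg _) (pow_le_one₀ hη0.le hη1)
    rw [this]; simp
  have hd' : (0 : ℝ) < s.card := by exact_mod_cast Nat.pos_of_ne_zero hd
  have hsub : {t : ℝ | |T.eval t| < ((2 : ℝ) ^ (-(K + 1))) ^ m * |T.eval 0|} ⊆
      {t | ENNReal.ofReal (s.card * K) ≤ (s.map fun w => dya w t).sum} := by
    intro t ht
    by_contra hcon
    simp only [Set.mem_ofPred_eq, not_le] at hcon ht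
    have hfin : (s.map fun w => dya w t).sum ≠ ∞ := (hcon.trans ENNReal.ofReal_lt_top).ne
    have h1 := prod_ge_of_dya s t hfin
    have h2 : ((s.map fun w => dya w t).sum).toReal ≤ s.card * K :=
      ENNReal.toReal_le_of_le_ofReal (by positivity) hcon.le
    rw [remez_aux T h0 t, ← hs] at ht
    have h3 : ((2 : ℝ) ^ (-(K + 1))) ^ m ≤ (s.map fun w => ‖1 - (t : ℂ) * w‖).prod := by
      calc ((2 : ℝ) ^ (-(K + 1))) ^ m ≤ ((2 : ℝ) ^ (-(K + 1))) ^ s.card :=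
            pow_le_pow_of_le_one hη0.le hη1 hcard
        _ = 2 ^ (-(s.card * K + s.card)) := by
            rw [← Real.rpow_natCast, ← Real.rpow_mul (by norm_num)]
            congr 1; ring
        _ ≤ _ := Real.rpow_le_rpow_of_exponent_le (by norm_num) (by linarith)
        _ ≤ _ := h1
    have h4 := mul_le_mul_of_nonneg_left h3 (abs_nonneg (T.eval 0))
    linarith [mul_comm |T.eval 0| (((2 : ℝ) ^ (-(K + 1))) ^ m)]
  refine (measure_mono hsub).trans ?_
  refine (meas_ge_le_lintegral_div (measurable_sum_dya s).aemeasurable ?_ ENNReal.ofReal_ne_top).trans ?_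
  · simp only [ne_eq, ENNReal.ofReal_eq_zero, not_le]; positivity
  · refine (ENNReal.div_le_div_right (lintegral_sum_dya s) _).trans (le_of_eq ?_)
    have : (4 : ℝ≥0∞) * s.card = ENNReal.ofReal (4 * s.card) := by
      rw [ENNReal.ofReal_mul (by norm_num)]; simp
    rw [this, ← ENNReal.ofReal_div_of_pos (by positivity)]
    congr 1
    field_simp

/-! ### Polynomials with a Gaussian weight -/

open MvPolynomial in
/-- Evaluation. -/
def ev {n : ℕ} (p : MvPolynomial (Fin n) ℝ) (x : En n) : ℝ := MvPolynomial.eval (fun i => x i) p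

/-- Gaussian weight. -/
def wt {n : ℕ} (x : En n) : ℝ := Real.exp (-‖x‖ ^ 2)

/-- Directional derivative on polynomials. -/
def Dv {n : ℕ} (v : En n) :
    Derivation ℝ (MvPolynomial (Fin n) ℝ) (MvPolynomial (Fin n) ℝ) :=
  MvPolynomial.mkDerivation ℝ (fun i => MvPolynomial.C (v i))

/-- Linear form. -/
def lin {n : ℕ} (v : En n) : MvPolynomial (Fin n) ℝ :=
  ∑ i, MvPolynomial.C (v i) * MvPolynomial.X i

lemma ev_add {n : ℕ} (p q : MvPolynomial (Fin n) ℝ) (x : En n) : ev (p + q) x = ev p x + ev q x := by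
  simp [ev]
lemma ev_sub {n : ℕ} (p q : MvPolynomial (Fin n) ℝ) (x : En n) : ev (p - q) x = ev p x - ev q x := by
  simp [ev]
lemma ev_mul {n : ℕ} (p q : MvPolynomial (Fin n) ℝ) (x : En n) : ev (p * q) x = ev p x * ev q x := by
  simp [ev]
lemma ev_C {n : ℕ} (a : ℝ) (x : En n) : ev (MvPolynomial.C a) x = a := by
  simp [ev]
lemma ev_X {n : ℕ} (i : Fin n) (x : En n) : ev (MvPolynomial.X i) x = x i := by
  simp [ev]
lemma ev_pow {n : ℕ} (p : MvPolynomial (Fin n) ℝ) (k : ℕ) (x : En n) : ev (p ^ k) x = ev p x ^ k := by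
  simp [ev]
lemma ev_sum {n : ℕ} {ι : Type*} (s : Finset ι) (p : ι → MvPolynomial (Fin n) ℝ) (x : En n) :
    ev (∑ i ∈ s, p i) x = ∑ i ∈ s, ev (p i) x := by
  simp [ev]

lemma ev_lin {n : ℕ} (v x : En n) : ev (lin v) x = inner ℝ v x := by
  rw [lin, ev_sum]
  simp only [ev_mul, ev_C, ev_X]
  rw [PiLp.inner_apply]
  simp [mul_comm]

lemma Dv_C {n : ℕ} (v : En n) (a : ℝ) : Dv v (MvPolynomial.C a) = 0 :=
  MvPolynomial.derivation_C _ _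

lemma Dv_X {n : ℕ} (v : En n) (i : Fin n) : Dv v (MvPolynomial.X i) = MvPolynomial.C (v i) :=
  MvPolynomial.mkDerivation_X _ _ _

lemma Dv_mul {n : ℕ} (v : En n) (p q : MvPolynomial (Fin n) ℝ) :
    Dv v (p * q) = p * Dv v q + q * Dv v p := by
  rw [Derivation.leibniz]; simp

lemma Dv_lin {n : ℕ} (v : En n) : Dv v (lin v) = MvPolynomial.C (‖v‖ ^ 2) := by
  rw [lin, map_sum]
  simp only [Dv_mul, Dv_C, Dv_X, mul_zero, add_zero]
  rw [EuclideanSpace.norm_sq_eq, map_sum]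
  refine Finset.sum_congr rfl fun i _ => ?_
  rw [← map_mul, Real.norm_eq_abs, sq_abs, sq]

lemma ev_continuous {n : ℕ} (p : MvPolynomial (Fin n) ℝ) : Continuous (ev p) := by
  induction p using MvPolynomial.induction_on with
  | C a => simpa only [ev_C, funext (fun x => ev_C (n := n) a x)] using continuous_const
  | add p q hp hq =>
    rw [show ev (p + q) = fun x => ev p x + ev q x from funext (ev_add p q)]
    exact hp.add hq
  | mul_X p i hp =>
    rw [show ev (p * MvPolynomial.X i) = fun x : En n => ev p x * x i from
      funext fun x => by rw [ev_mul, ev_X]]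
    exact hp.mul (by fun_prop)

lemma wt_continuous {n : ℕ} : Continuous (wt (n := n)) := by
  unfold wt; fun_prop

lemma wt_pos {n : ℕ} (x : En n) : 0 < wt x := Real.exp_pos _

lemma ev_bound {n : ℕ} (p : MvPolynomial (Fin n) ℝ) :
    ∃ (C : ℝ), 0 ≤ C ∧ ∃ k : ℕ, ∀ x : En n, |ev p x| ≤ C * (1 + ‖x‖ ^ 2) ^ k := by
  induction p using MvPolynomial.induction_on with
  | C a => exact ⟨|a|, abs_nonneg _, 0, fun x => by rw [ev_C]; simp⟩
  | add p q hp hq =>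
    obtain ⟨C, hC, k, h⟩ := hp
    obtain ⟨C', hC', k', h'⟩ := hq
    refine ⟨C + C', by positivity, max k k', fun x => ?_⟩
    have h1 : (1 : ℝ) ≤ 1 + ‖x‖ ^ 2 := by nlinarith [sq_nonneg ‖x‖]
    rw [ev_add, add_mul]
    refine (abs_add_le _ _).trans (add_le_add ?_ ?_)
    · exact (h x).trans (mul_le_mul_of_nonneg_left (pow_le_pow_right₀ h1 (le_max_left _ _)) hC)
    · exact (h' x).trans (mul_le_mul_of_nonneg_left (pow_le_pow_right₀ h1 (le_max_right _ _)) hC')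
  | mul_X p i hp =>
    obtain ⟨C, hC, k, h⟩ := hp
    refine ⟨C, hC, k + 1, fun x => ?_⟩
    rw [ev_mul, ev_X, abs_mul, pow_succ, ← mul_assoc]
    have h2 : |x i| ≤ ‖x‖ := by simpa using PiLp.norm_apply_le x i
    refine mul_le_mul (h x) ?_ (abs_nonneg _) (by positivity)
    nlinarith [sq_nonneg (‖x‖ - 1)]

lemma integrable_gauss {n : ℕ} (b : ℝ) (hb : 0 < b) :
    Integrable (fun x : En n => Real.exp (-b * ‖x‖ ^ 2)) := by
  have h := GaussianFourier.integrable_cexp_neg_mul_sq_norm_add (V := En n) (b := (b : ℂ))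
    (by simpa using hb) 0 0
  have h2 := h.norm
  refine h2.congr (Filter.Eventually.of_forall fun x => ?_)
  simp only [Complex.norm_exp]
  congr 1
  simp [← Complex.ofReal_pow]

lemma poly_exp_bound (k : ℕ) : ∃ C : ℝ, 0 ≤ C ∧ ∀ s : ℝ, 0 ≤ s →
    (1 + s) ^ k * Real.exp (-s) ≤ C * Real.exp (-(1 / 2) * s) := by
  refine ⟨(k.factorial : ℝ) * 2 ^ k * Real.exp (1 / 2), by positivity, fun s hs => ?_⟩
  have h1 := Real.pow_div_factorial_le_exp ((1 + s) / 2) (by positivity) k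
  rw [div_le_iff₀ (by positivity), div_pow, div_le_iff₀ (by positivity)] at h1
  calc (1 + s) ^ k * Real.exp (-s)
      ≤ (Real.exp ((1 + s) / 2) * k.factorial * 2 ^ k) * Real.exp (-s) := by gcongr
    _ = (k.factorial : ℝ) * 2 ^ k * (Real.exp ((1 + s) / 2) * Real.exp (-s)) := by ring
    _ = (k.factorial : ℝ) * 2 ^ k * (Real.exp (1 / 2) * Real.exp (-(1 / 2) * s)) := by
        rw [← Real.exp_add, ← Real.exp_add]; congr 2; ring
    _ = _ := by ring

lemma integrable_ev {n : ℕ} (p : MvPolynomial (Fin n) ℝ) :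
    Integrable (fun x : En n => ev p x * wt x) := by
  obtain ⟨C, hC, k, h⟩ := ev_bound p
  obtain ⟨C', hC', h'⟩ := poly_exp_bound k
  refine ((integrable_gauss (n := n) (1 / 2) (by norm_num)).const_mul (C * C')).mono'
    ((ev_continuous p).mul wt_continuous).aestronglyMeasurable ?_
  refine Filter.Eventually.of_forall fun x => ?_
  rw [Real.norm_eq_abs, abs_mul, abs_of_pos (wt_pos x), wt]
  calc |ev p x| * Real.exp (-‖x‖ ^ 2) ≤ C * (1 + ‖x‖ ^ 2) ^ k * Real.exp (-‖x‖ ^ 2) :=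
        mul_le_mul_of_nonneg_right (h x) (Real.exp_pos _).le
    _ = C * ((1 + ‖x‖ ^ 2) ^ k * Real.exp (-‖x‖ ^ 2)) := by ring
    _ ≤ C * (C' * Real.exp (-(1 / 2) * ‖x‖ ^ 2)) :=
        mul_le_mul_of_nonneg_left (h' _ (by positivity)) hC
    _ = _ := by ring

/-- Gaussian integral of a polynomial. -/
def GI {n : ℕ} (p : MvPolynomial (Fin n) ℝ) : ℝ := ∫ x : En n, ev p x * wt x

lemma GI_add {n : ℕ} (p q : MvPolynomial (Fin n) ℝ) : GI (p + q) = GI p + GI q := by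
  unfold GI
  rw [← integral_add (integrable_ev p) (integrable_ev q)]
  simp only [ev_add, add_mul]

lemma GI_sub {n : ℕ} (p q : MvPolynomial (Fin n) ℝ) : GI (p - q) = GI p - GI q := by
  unfold GI
  rw [← integral_sub (integrable_ev p) (integrable_ev q)]
  simp only [ev_sub, sub_mul]

lemma GI_C_mul {n : ℕ} (a : ℝ) (p : MvPolynomial (Fin n) ℝ) :
    GI (MvPolynomial.C a * p) = a * GI p := by
  unfold GI
  rw [← integral_const_mul]
  simp only [ev_mul, ev_C, mul_assoc]

lemma GI_sq_nonneg {n : ℕ} (p : MvPolynomial (Fin n) ℝ) : 0 ≤ GI (p ^ 2) := by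
  unfold GI
  refine integral_nonneg fun x => ?_
  have := wt_pos x
  simp only [ev_pow, Pi.zero_apply]
  positivity

lemma GI_cs {n : ℕ} (p q : MvPolynomial (Fin n) ℝ) :
    GI (p * q) ^ 2 ≤ GI (p ^ 2) * GI (q ^ 2) := by
  have h : ∀ t : ℝ, 0 ≤ GI (q ^ 2) * (t * t) + (2 * GI (p * q)) * t + GI (p ^ 2) := by
    intro t
    have h1 := GI_sq_nonneg (p + MvPolynomial.C t * q)
    have h2 : (p + MvPolynomial.C t * q) ^ 2 = MvPolynomial.C (t * t) * q ^ 2 +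
        MvPolynomial.C (2 * t) * (p * q) + p ^ 2 := by
      simp only [map_mul, map_ofNat]; ring
    rw [h2, GI_add, GI_add, GI_C_mul, GI_C_mul] at h1
    linarith
  have := discrim_le_zero h
  unfold discrim at this
  nlinarith

lemma ev_hasLineDeriv {n : ℕ} (p : MvPolynomial (Fin n) ℝ) (v x : En n) :
    HasLineDerivAt ℝ (ev p) (ev (Dv v p) x) x v := by
  unfold HasLineDerivAt
  induction p using MvPolynomial.induction_on with
  | C a => simpa only [ev_C, Dv_C, ev, map_zero, MvPolynomial.eval_C] using hasDerivAt_const _ _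
  | add p q hp hq =>
    rw [map_add]
    simp only [ev_add]
    exact hp.add hq
  | mul_X p i hp =>
    rw [Dv_mul]
    simp only [ev_add, ev_mul, ev_X, Dv_X, ev_C]
    have h1 : HasDerivAt (fun t : ℝ => (x + t • v) i) (v i) 0 := by
      simp only [PiLp.add_apply, PiLp.smul_apply, smul_eq_mul]
      simpa using ((hasDerivAt_id (0 : ℝ)).mul_const (v i)).const_add (x i)
    have h2 := hp.mul h1
    simp only [zero_smul, add_zero] at h2
    refine h2.congr_deriv ?_
    ring

lemma wt_hasLineDeriv {n : ℕ} (v x : En n) :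
    HasLineDerivAt ℝ (wt (n := n)) (-(2 * inner ℝ v x) * wt x) x v := by
  have h : HasFDerivAt (fun x : En n => -‖x‖ ^ 2) (-(2 • (innerSL ℝ x))) x :=
    (hasStrictFDerivAt_norm_sq x).hasFDerivAt.neg
  have h2 := h.exp.hasLineDerivAt v
  have h3 : (Real.exp (-‖x‖ ^ 2) • -(2 • (innerSL ℝ x))) v = -(2 * inner ℝ v x) * wt x := by
    simp [wt, real_inner_comm v x]
    ring
  rw [← h3]
  exact h2

lemma GI_ibp {n : ℕ} (v : En n) (p : MvPolynomial (Fin n) ℝ) :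
    GI (Dv v p) = GI (MvPolynomial.C 2 * lin v * p) := by
  have h := integral_bilinear_hasLineDerivAt_right_eq_neg_left_of_integrable
    (μ := (volume : Measure (En n))) (f := ev p) (f' := fun x => ev (Dv v p) x) (g := wt)
    (g' := fun x => -(2 * inner ℝ v x) * wt x) (v := v) (B := ContinuousLinearMap.mul ℝ ℝ)
    (by simpa using integrable_ev _)
    (by
      have := (integrable_ev (MvPolynomial.C 2 * lin v * p)).neg
      refine this.congr (Filter.Eventually.of_forall fun x => ?_)
      simp only [ev_mul, ev_C, ev_lin, Pi.neg_apply, ContinuousLinearMap.mul_apply']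
      ring)
    (by simpa using integrable_ev p)
    (fun x _ => ev_hasLineDeriv p v x) (fun x _ => wt_hasLineDeriv v x)
  simp only [ContinuousLinearMap.mul_apply'] at h
  unfold GI
  rw [← neg_eq_iff_eq_neg.2 h, ← integral_neg]
  congr 1
  ext x
  simp only [ev_mul, ev_C, ev_lin]
  ring

/-- Formal adjoint of the directional derivative. -/
def Ds {n : ℕ} (v : En n) (q : MvPolynomial (Fin n) ℝ) : MvPolynomial (Fin n) ℝ :=
  MvPolynomial.C 2 * lin v * q - Dv v q

lemma GI_adj {n : ℕ} (v : En n) (p q : MvPolynomial (Fin n) ℝ) :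
    GI (Dv v p * q) = GI (p * Ds v q) := by
  have h := GI_ibp v (p * q)
  rw [Dv_mul, GI_add] at h
  have h2 : p * Ds v q = MvPolynomial.C 2 * lin v * (p * q) - p * Dv v q := by
    unfold Ds; ring
  rw [h2, GI_sub, ← h, mul_comm (Dv v p) q]
  ring

lemma Dv_Ds {n : ℕ} (v : En n) (q : MvPolynomial (Fin n) ℝ) :
    Dv v (Ds v q) = MvPolynomial.C (2 * ‖v‖ ^ 2) * q + Ds v (Dv v q) := by
  unfold Ds
  rw [map_sub, Dv_mul, Dv_mul, Dv_C, Dv_lin, map_mul]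
  ring

lemma GI_Ds_sq {n : ℕ} (v : En n) (q : MvPolynomial (Fin n) ℝ) :
    GI (Ds v q ^ 2) = 2 * ‖v‖ ^ 2 * GI (q ^ 2) + GI (Dv v q ^ 2) := by
  rw [sq, ← GI_adj, Dv_Ds, add_mul, GI_add]
  have h1 : MvPolynomial.C (2 * ‖v‖ ^ 2) * q * q = MvPolynomial.C (2 * ‖v‖ ^ 2) * q ^ 2 := by ring
  have h2 : Ds v (Dv v q) * q = q * Ds v (Dv v q) := by ring
  rw [h1, h2, GI_C_mul, ← GI_adj, sq (Dv v q)]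

lemma gauss_bernstein {n : ℕ} (v : En n) (N : ℕ) (p : MvPolynomial (Fin n) ℝ)
    (h : (Dv v)^[N + 1] p = 0) :
    GI (Dv v p ^ 2) ≤ 2 * N * ‖v‖ ^ 2 * GI (p ^ 2) := by
  induction N generalizing p with
  | zero =>
    simp only [zero_add, Function.iterate_one] at h
    rw [h]
    simp [GI, ev]
  | succ N ih =>
    have h1 := ih (Dv v p) (by rwa [Function.iterate_succ_apply] at h)
    have h2 : GI (Dv v p ^ 2) = GI (p * Ds v (Dv v p)) := by rw [sq, GI_adj]
    have h3 := GI_cs p (Ds v (Dv v p))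
    rw [← h2, GI_Ds_sq] at h3
    have ha := GI_sq_nonneg p
    have hb := GI_sq_nonneg (Dv v p)
    rcases hb.eq_or_lt with hb0 | hb0
    · rw [← hb0]; positivity
    · have h4 : GI (Dv v p ^ 2) * GI (Dv v p ^ 2) ≤
          (2 * ((N + 1 : ℕ) : ℝ) * ‖v‖ ^ 2 * GI (p ^ 2)) * GI (Dv v p ^ 2) := by
        have := mul_le_mul_of_nonneg_left h1 ha
        push_cast
        nlinarith
      exact le_of_mul_le_mul_right h4 hb0

lemma bernstein_iter {n : ℕ} (v : En n) (N : ℕ) (p : MvPolynomial (Fin n) ℝ)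
    (h : (Dv v)^[N + 1] p = 0) (k : ℕ) :
    GI ((Dv v)^[k] p ^ 2) ≤ (2 * N * ‖v‖ ^ 2) ^ k * GI (p ^ 2) := by
  induction k with
  | zero => simp
  | succ k ih =>
    have h1 : (Dv v)^[N + 1] ((Dv v)^[k] p) = 0 := by
      rw [← Function.iterate_add_apply, add_comm, Function.iterate_add_apply, h]
      exact iterate_map_zero (Dv v) k
    have h2 := gauss_bernstein v N _ h1
    rw [Function.iterate_succ_apply', pow_succ' (2 * (N : ℝ) * ‖v‖ ^ 2) k]
    refine h2.trans ?_
    rw [mul_assoc (2 * (N : ℝ) * ‖v‖ ^ 2)]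
    exact mul_le_mul_of_nonneg_left ih (by positivity)

/-! ### Taylor expansion along lines -/

/-- Restriction of a polynomial to a line. -/
def lineP {n : ℕ} (p : MvPolynomial (Fin n) ℝ) (y v : En n) : Polynomial ℝ :=
  MvPolynomial.aeval (fun i => Polynomial.C (y i) + Polynomial.C (v i) * Polynomial.X) p

lemma lineP_eval {n : ℕ} (p : MvPolynomial (Fin n) ℝ) (y v : En n) (t : ℝ) :
    (lineP p y v).eval t = ev p (y + t • v) := by
  unfold lineP
  induction p using MvPolynomial.induction_on with
  | C a => simp [ev]
  | add p q hp hq => rw [map_add, Polynomial.eval_add, hp, hq, ev_add]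
  | mul_X p i hp =>
    rw [map_mul, Polynomial.eval_mul, hp, ev_mul, ev_X]
    simp only [MvPolynomial.aeval_X, Polynomial.eval_add, Polynomial.eval_C, Polynomial.eval_mul,
      Polynomial.eval_X, PiLp.add_apply, PiLp.smul_apply, smul_eq_mul]
    ring

lemma lineP_derivative {n : ℕ} (p : MvPolynomial (Fin n) ℝ) (y v : En n) :
    Polynomial.derivative (lineP p y v) = lineP (Dv v p) y v := by
  unfold lineP
  induction p using MvPolynomial.induction_on with
  | C a => simp
  | add p q hp hq => simp only [map_add, hp, hq]
  | mul_X p i hp =>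
    rw [map_mul, Polynomial.derivative_mul, hp, Dv_mul, map_add, map_mul, map_mul, Dv_X]
    simp
    ring

lemma lineP_derivative_iter {n : ℕ} (p : MvPolynomial (Fin n) ℝ) (y v : En n) (k : ℕ) :
    Polynomial.derivative^[k] (lineP p y v) = lineP ((Dv v)^[k] p) y v := by
  induction k with
  | zero => rfl
  | succ k ih => rw [Function.iterate_succ_apply', ih, lineP_derivative, Function.iterate_succ_apply']

lemma lineP_natDegree {n : ℕ} (p : MvPolynomial (Fin n) ℝ) (y v : En n) :
    (lineP p y v).natDegree ≤ p.totalDegree := by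
  have h := MvPolynomial.aeval_natDegree_le (m := p.totalDegree) (n := 1) p le_rfl
    (fun i => Polynomial.C (y i) + Polynomial.C (v i) * Polynomial.X) (by
      intro i
      rw [add_comm]
      exact Polynomial.natDegree_linear_le)
  simpa [lineP] using h

lemma lineP_coeff {n : ℕ} (p : MvPolynomial (Fin n) ℝ) (y v : En n) (k : ℕ) :
    (lineP p y v).coeff k = ev ((Dv v)^[k] p) y / k.factorial := by
  have h := Polynomial.coeff_iterate_derivative (k := k) (lineP p y v) 0
  rw [lineP_derivative_iter, Polynomial.coeff_zero_eq_eval_zero, lineP_eval, zero_smul, add_zero,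
    zero_add, Nat.descFactorial_self, nsmul_eq_mul] at h
  rw [h]
  field_simp

lemma Dv_iter_eq_zero {n : ℕ} (p : MvPolynomial (Fin n) ℝ) (v : En n) (N : ℕ)
    (hN : p.totalDegree ≤ N) : (Dv v)^[N + 1] p = 0 := by
  apply MvPolynomial.funext
  intro x
  have h := lineP_coeff p (WithLp.toLp 2 x) v (N + 1)
  rw [Polynomial.coeff_eq_zero_of_natDegree_lt
    (((lineP_natDegree p _ v).trans hN).trans_lt (Nat.lt_succ_self N))] at h
  have h2 : ((N + 1).factorial : ℝ) ≠ 0 := by positivity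
  have h3 := (div_eq_zero_iff.1 h.symm).resolve_right h2
  rw [map_zero]
  exact h3

/-- Truncated Taylor polynomial. -/
def tayT {n : ℕ} (p : MvPolynomial (Fin n) ℝ) (m : ℕ) (y v : En n) : Polynomial ℝ :=
  ∑ k ∈ Finset.range (m + 1), Polynomial.C (ev ((Dv v)^[k] p) y / k.factorial) * Polynomial.X ^ k

lemma tayT_natDegree {n : ℕ} (p : MvPolynomial (Fin n) ℝ) (m : ℕ) (y v : En n) :
    (tayT p m y v).natDegree ≤ m := by
  unfold tayT
  refine Polynomial.natDegree_sum_le_of_forall_le _ _ fun k hk => ?_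
  refine (Polynomial.natDegree_C_mul_X_pow_le _ _).trans ?_
  have := Finset.mem_range.1 hk; omega

lemma tayT_eval {n : ℕ} (p : MvPolynomial (Fin n) ℝ) (m : ℕ) (y v : En n) (t : ℝ) :
    (tayT p m y v).eval t =
      ∑ k ∈ Finset.range (m + 1), ev ((Dv v)^[k] p) y / k.factorial * t ^ k := by
  unfold tayT
  rw [Polynomial.eval_finsetSum]
  simp

lemma tayT_eval_zero {n : ℕ} (p : MvPolynomial (Fin n) ℝ) (m : ℕ) (y v : En n) :
    (tayT p m y v).eval 0 = ev p y := by
  rw [tayT_eval, Finset.sum_range_succ']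
  simp

/-- Remainder control function. -/
def remS {n : ℕ} (p : MvPolynomial (Fin n) ℝ) (m N : ℕ) (y v : En n) : ℝ :=
  2 * ∑ k ∈ Finset.Ico (m + 1) (N + 1), 2 ^ k * (ev ((Dv v)^[k] p) y) ^ 2 / (k.factorial : ℝ) ^ 2

lemma sum_sq_bound (s : Finset ℕ) (a : ℕ → ℝ) :
    (∑ k ∈ s, a k) ^ 2 ≤ 2 * ∑ k ∈ s, 2 ^ k * a k ^ 2 := by
  have h := Finset.sum_sq_le_sum_mul_sum_of_sq_le_mul s (r := a) (f := fun k => (1 / 2 : ℝ) ^ k)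
    (g := fun k => 2 ^ k * a k ^ 2) (fun i _ => by positivity) (fun i _ => by positivity)
    (fun i _ => by
      rw [← mul_assoc, ← mul_pow]; norm_num)
  refine h.trans ?_
  refine mul_le_mul_of_nonneg_right ?_ (Finset.sum_nonneg fun i _ => by positivity)
  have h2 := summable_geometric_two.sum_le_tsum s (fun i _ => by positivity)
  rwa [tsum_geometric_two] at h2

lemma taylor_bound {n : ℕ} (p : MvPolynomial (Fin n) ℝ) (m N : ℕ) (hN : p.totalDegree ≤ N)
    (y v : En n) (t : ℝ) (ht0 : 0 ≤ t) (ht1 : t ≤ 1) :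
    ((tayT p m y v).eval t) ^ 2 ≤ 2 * (ev p (y + t • v) ^ 2 + remS p m N y v) := by
  have hev : ev p (y + t • v) =
      ∑ k ∈ Finset.range (N + 1), ev ((Dv v)^[k] p) y / k.factorial * t ^ k := by
    rw [← lineP_eval, Polynomial.eval_eq_sum_range' (n := N + 1)
      (((lineP_natDegree p y v).trans hN).trans_lt (Nat.lt_succ_self N))]
    simp only [lineP_coeff]
  have hrem : (ev p (y + t • v) - (tayT p m y v).eval t) ^ 2 ≤ remS p m N y v := by
    rw [tayT_eval, hev]
    rcases le_total m N with hmN | hmN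
    · rw [← Finset.sum_Ico_eq_sub _ (Nat.succ_le_succ hmN)]
      refine (sum_sq_bound _ _).trans ?_
      unfold remS
      refine mul_le_mul_of_nonneg_left (Finset.sum_le_sum fun k _ => ?_) (by norm_num)
      rw [mul_pow, div_pow, mul_div_assoc]
      refine mul_le_mul_of_nonneg_left ?_ (by positivity)
      refine mul_le_of_le_one_right (by positivity) ?_
      exact pow_le_one₀ (by positivity) (pow_le_one₀ ht0 ht1)
    · have h0 : remS p m N y v = 0 := by
        unfold remS; rw [Finset.Ico_eq_empty (by omega)]; simp
      rw [h0]
      have : ∑ k ∈ Finset.range (N + 1), ev ((Dv v)^[k] p) y / k.factorial * t ^ k =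
          ∑ k ∈ Finset.range (m + 1), ev ((Dv v)^[k] p) y / k.factorial * t ^ k := by
        refine Finset.sum_subset (Finset.range_mono (by omega)) fun k _ hk => ?_
        rw [← lineP_coeff, Polynomial.coeff_eq_zero_of_natDegree_lt, zero_mul]
        have := Finset.mem_range.not.1 hk
        exact ((lineP_natDegree p y v).trans hN).trans_lt (by omega)
      rw [this]; simp
  nlinarith [sq_nonneg (ev p (y + t • v) + (ev p (y + t • v) - (tayT p m y v).eval t))]

lemma Dv_eq_sum {n : ℕ} (v : En n) (p : MvPolynomial (Fin n) ℝ) :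
    Dv v p = ∑ i, v i • MvPolynomial.pderiv i p := by
  induction p using MvPolynomial.induction_on with
  | C a => simp
  | add p q hp hq => simp only [map_add, hp, hq, smul_add, Finset.sum_add_distrib]
  | mul_X p i hp =>
    rw [Dv_mul, hp, Dv_X]
    simp only [MvPolynomial.pderiv_mul, smul_add, Finset.sum_add_distrib, MvPolynomial.pderiv_X]
    rw [add_comm, Finset.mul_sum]
    congr 1
    · exact Finset.sum_congr rfl fun j _ => by rw [mul_comm, smul_mul_assoc]
    · rw [Finset.sum_eq_single i]
      · simp [MvPolynomial.smul_eq_C_mul, mul_comm]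
      · intro j _ hj
        simp [hj.symm]
      · simp

lemma Dv_iter_continuous {n : ℕ} (k : ℕ) (p : MvPolynomial (Fin n) ℝ) :
    Continuous fun z : En n × En n => ev ((Dv z.2)^[k] p) z.1 := by
  induction k generalizing p with
  | zero => exact (ev_continuous p).comp continuous_fst
  | succ k ih =>
    have : (fun z : En n × En n => ev ((Dv z.2)^[k + 1] p) z.1) =
        fun z => ∑ i, z.2 i * ev ((Dv z.2)^[k] (MvPolynomial.pderiv i p)) z.1 := by
      ext z
      rw [Function.iterate_succ_apply, Dv_eq_sum z.2 p]
      have hpow : ∀ q, (⇑(Dv z.2))^[k] q = (((Dv z.2) : _ →ₗ[ℝ] _) ^ k) q := by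
        intro q; rw [Module.End.pow_apply]; rfl
      rw [hpow, map_sum, ev_sum]
      refine Finset.sum_congr rfl fun i _ => ?_
      rw [map_smul, ← hpow, MvPolynomial.smul_eq_C_mul, ev_mul, ev_C]
    rw [this]
    refine continuous_finsetSum _ fun i _ => ?_
    exact Continuous.mul (by fun_prop) (ih _)

lemma GI_coord {n : ℕ} (p : MvPolynomial (Fin n) ℝ) (N : ℕ) (hN : p.totalDegree ≤ N) (i : Fin n) :
    GI ((MvPolynomial.X i * p) ^ 2) ≤ (2 * N + 1) * GI (p ^ 2) := by
  set v : En n := EuclideanSpace.single i 1 with hv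
  have hl : lin v = MvPolynomial.X i := by
    rw [lin, Finset.sum_eq_single i]
    · simp [hv]
    · intro j _ hj; simp [hv, hj]
    · simp
  have hvn : ‖v‖ = 1 := by simp [hv]
  have h1 := GI_Ds_sq v p
  have h2 := gauss_bernstein v N p (Dv_iter_eq_zero p v N hN)
  rw [hvn] at h1 h2
  have h3 : MvPolynomial.C 4 * (MvPolynomial.X i * p) ^ 2 + (Ds v p - Dv v p) ^ 2 =
      MvPolynomial.C 2 * Ds v p ^ 2 + MvPolynomial.C 2 * Dv v p ^ 2 := by
    have : (MvPolynomial.C 4 : MvPolynomial (Fin n) ℝ) = MvPolynomial.C 2 ^ 2 := by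
      rw [← map_pow]; norm_num
    have h2' : (MvPolynomial.C 2 : MvPolynomial (Fin n) ℝ) = 2 := map_ofNat _ 2
    rw [this, Ds, hl, h2']; ring
  have h4 := congrArg GI h3
  rw [GI_add, GI_add, GI_C_mul, GI_C_mul, GI_C_mul] at h4
  have h5 := GI_sq_nonneg (Ds v p - Dv v p)
  nlinarith

/-! ### Covering argument -/

lemma vitali_thick (n : ℕ) (γ : ℝ) (ρ : En n → ℝ) (hρ : ∀ x, 0 < ρ x) (ω : Set (En n))
    (hω : MeasurableSet ω) (hth : ThickWith n γ ρ ω) (y : En n) (s M : ℝ)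
    (hM : ∀ x ∈ Metric.ball y s, ρ x ≤ M) :
    ENNReal.ofReal γ * volume (Metric.ball y s) ≤
      ENNReal.ofReal (5 ^ n) * volume (ω ∩ Metric.ball y (s + M)) := by
  obtain ⟨u, hut, hdisj, hcov⟩ :=
    Vitali.exists_disjoint_subfamily_covering_enlargement_closedBall (Metric.ball y s)
      (fun x : En n => x) ρ M hM 5 (by norm_num)
  have hcount : u.Countable := by
    refine hdisj.countable_of_nonempty_interior fun x _ => ?_
    exact ⟨x, Metric.ball_subset_interior_closedBall (Metric.mem_ball_self (hρ x))⟩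
  have hcov2 : Metric.ball y s ⊆ ⋃ b ∈ u, Metric.closedBall b (5 * ρ b) := by
    intro x hx
    obtain ⟨b, hb, hsub⟩ := hcov x hx
    exact Set.mem_biUnion hb (hsub (Metric.mem_closedBall_self (hρ x).le))
  have hball : ∀ b : En n, volume (Metric.closedBall b (5 * ρ b)) =
      ENNReal.ofReal (5 ^ n) * volume (Metric.ball b (ρ b)) := by
    intro b
    have hb := hρ b
    rw [Measure.addHaar_closedBall _ _ (by positivity), Measure.addHaar_ball_of_pos _ _ hb,
      finrank_euclideanSpace, Fintype.card_fin, mul_pow, ENNReal.ofReal_mul (by positivity),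
      mul_assoc]
  have := hcount.to_subtype
  calc ENNReal.ofReal γ * volume (Metric.ball y s)
      ≤ ENNReal.ofReal γ * ∑' b : u, volume (Metric.closedBall (b : En n) (5 * ρ b)) := by
        gcongr
        exact (measure_mono hcov2).trans (measure_biUnion_le _ hcount _)
    _ = ENNReal.ofReal (5 ^ n) *
          ∑' b : u, ENNReal.ofReal γ * volume (Metric.ball (b : En n) (ρ b)) := by
        simp only [hball]
        rw [ENNReal.tsum_mul_left, ENNReal.tsum_mul_left]
        ring
    _ ≤ ENNReal.ofReal (5 ^ n) * ∑' b : u, volume (ω ∩ Metric.ball (b : En n) (ρ b)) := by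
        gcongr with b
        exact hth b
    _ = ENNReal.ofReal (5 ^ n) * volume (⋃ b ∈ u, ω ∩ Metric.ball b (ρ b)) := by
        rw [measure_biUnion hcount]
        · intro a ha b hb hab
          exact (hdisj ha hb hab).mono
            (Set.inter_subset_right.trans Metric.ball_subset_closedBall)
            (Set.inter_subset_right.trans Metric.ball_subset_closedBall)
        · intro b _
          exact hω.inter measurableSet_ball
    _ ≤ _ := by
        gcongr
        refine Set.iUnion₂_subset fun b hb => Set.inter_subset_inter_right _ ?_
        refine Metric.ball_subset_ball' ?_
        have h1 := hM b (hut hb)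
        have h2 := Metric.mem_ball.1 (hut hb)
        linarith

/-- Parameter measure on directions and times. -/
def nuM (n : ℕ) (r : ℝ) : Measure (En n × ℝ) :=
  (volume.restrict (Metric.ball (0 : En n) (2 * r))).prod (volume.restrict (Set.Icc (0 : ℝ) 1))

/-- Parameters hitting the set. -/
def setA {n : ℕ} (ω : Set (En n)) (y : En n) : Set (En n × ℝ) := {z | y + z.2 • z.1 ∈ ω}

lemma measurableSet_setA {n : ℕ} (ω : Set (En n)) (hω : MeasurableSet ω) (y : En n) :
    MeasurableSet (setA ω y) := by
  have : Measurable fun z : En n × ℝ => y + z.2 • z.1 :=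
    (by fun_prop : Continuous fun z : En n × ℝ => y + z.2 • z.1).measurable
  exact this hω

lemma setA_measure {n : ℕ} (ω : Set (En n)) (hω : MeasurableSet ω) (y : En n) (r c : ℝ)
    (hc : 0 < c)
    (h : ENNReal.ofReal c * volume (Metric.ball (0 : En n) (2 * r)) ≤
      volume (ω ∩ Metric.ball y r)) :
    ENNReal.ofReal (c / 2) * volume (Metric.ball (0 : En n) (2 * r)) ≤ nuM n r (setA ω y) := by
  unfold nuM
  rw [Measure.prod_apply_symm (measurableSet_setA ω hω y)]
  have key : ∀ t ∈ Set.Icc (1 / 2 : ℝ) 1, ENNReal.ofReal c * volume (Metric.ball (0 : En n) (2 * r)) ≤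
      (volume.restrict (Metric.ball (0 : En n) (2 * r))) ((fun v => (v, t)) ⁻¹' setA ω y) := by
    intro t ht
    have ht0 : 0 < t := by linarith [ht.1]
    refine h.trans ?_
    have hm : MeasurableSet ((fun v : En n => (v, t)) ⁻¹' setA ω y) :=
      (measurableSet_setA ω hω y).preimage (by fun_prop)
    rw [Measure.restrict_apply hm]
    have h1 : volume (ω ∩ Metric.ball y r) = volume ((fun u => y + u) ⁻¹' (ω ∩ Metric.ball y r)) :=
      (measure_preimage_add _ _ _).symm
    rw [h1]
    have h2 := Measure.addHaar_preimage_smul (volume : Measure (En n)) ht0.ne'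
      ((fun u => y + u) ⁻¹' (ω ∩ Metric.ball y r))
    have h3 : volume ((fun u => y + u) ⁻¹' (ω ∩ Metric.ball y r)) ≤
        volume ((t • ·) ⁻¹' ((fun u => y + u) ⁻¹' (ω ∩ Metric.ball y r))) := by
      rw [h2]
      refine le_mul_of_one_le_left zero_le ?_
      rw [ENNReal.one_le_ofReal, abs_of_pos (by positivity)]
      exact (one_le_inv₀ (by positivity)).2 (pow_le_one₀ ht0.le ht.2)
    refine h3.trans (measure_mono ?_)
    intro v hv
    refine ⟨hv.1, ?_⟩
    have h4 : y + t • v ∈ Metric.ball y r := hv.2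
    rw [Metric.mem_ball, dist_self_add_left, norm_smul, Real.norm_eq_abs, abs_of_pos ht0] at h4
    rw [Metric.mem_ball, dist_zero_right]
    nlinarith [norm_nonneg v, ht.1]
  calc ENNReal.ofReal (c / 2) * volume (Metric.ball (0 : En n) (2 * r))
      = ∫⁻ _ in Set.Icc (1 / 2 : ℝ) 1, ENNReal.ofReal c * volume (Metric.ball (0 : En n) (2 * r)) := by
        rw [setLIntegral_const, Real.volume_Icc, div_eq_mul_inv, ENNReal.ofReal_mul hc.le]
        have : (1 - 1 / 2 : ℝ) = 2⁻¹ := by norm_num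
        rw [this]; ring
    _ ≤ ∫⁻ t in Set.Icc (1 / 2 : ℝ) 1,
        (volume.restrict (Metric.ball (0 : En n) (2 * r))) ((fun v => (v, t)) ⁻¹' setA ω y) :=
        setLIntegral_mono' measurableSet_Icc key
    _ ≤ _ := lintegral_mono_set (Set.Icc_subset_Icc (by norm_num) le_rfl)

lemma tayT_continuous {n : ℕ} (p : MvPolynomial (Fin n) ℝ) (m : ℕ) :
    Continuous fun z : En n × (En n × ℝ) => (tayT p m z.1 z.2.1).eval z.2.2 := by
  simp only [tayT_eval]
  refine continuous_finsetSum _ fun k _ => ?_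
  have h := (Dv_iter_continuous k p).comp
    (by fun_prop : Continuous fun z : En n × (En n × ℝ) => (z.1, z.2.1))
  exact (h.div_const _).mul (by fun_prop)

lemma remS_continuous {n : ℕ} (p : MvPolynomial (Fin n) ℝ) (m N : ℕ) :
    Continuous fun z : En n × (En n × ℝ) => remS p m N z.1 z.2.1 := by
  unfold remS
  refine continuous_const.mul (continuous_finsetSum _ fun k _ => ?_)
  have h := (Dv_iter_continuous k p).comp
    (by fun_prop : Continuous fun z : En n × (En n × ℝ) => (z.1, z.2.1))
  exact ((continuous_const.mul (h.pow 2)).div_const _)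

/-- Constant in the pointwise estimate. -/
def etaC (c : ℝ) : ℝ := (2 : ℝ) ^ (-(8 / c + 1))

lemma etaC_pos (c : ℝ) : 0 < etaC c := by unfold etaC; positivity

lemma etaC_le_one (c : ℝ) (hc : 0 < c) : etaC c ≤ 1 := by
  unfold etaC
  refine Real.rpow_le_one_of_one_le_of_nonpos (by norm_num) ?_
  have : 0 < 8 / c := by positivity
  linarith

lemma pointwise_est {n : ℕ} (p : MvPolynomial (Fin n) ℝ) (m : ℕ) (ω : Set (En n))
    (hω : MeasurableSet ω) (y : En n) (r c : ℝ) (hc : 0 < c)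
    (h : ENNReal.ofReal c * volume (Metric.ball (0 : En n) (2 * r)) ≤ nuM n r (setA ω y)) :
    ENNReal.ofReal (c / 2 * (etaC c ^ m) ^ 2 * ev p y ^ 2) * volume (Metric.ball (0 : En n) (2 * r))
      ≤ ∫⁻ z in setA ω y, ENNReal.ofReal ((tayT p m y z.1).eval z.2 ^ 2) ∂(nuM n r) := by
  set V := volume (Metric.ball (0 : En n) (2 * r)) with hV
  have hVfin : V ≠ ∞ := measure_ball_lt_top.ne
  have hcont : Continuous fun z : En n × ℝ => (tayT p m y z.1).eval z.2 :=
    (tayT_continuous p m).comp (by fun_prop : Continuous fun z : En n × ℝ => (y, z))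
  set Bad : Set (En n × ℝ) := {z | |(tayT p m y z.1).eval z.2| < etaC c ^ m * |ev p y|} with hBad
  have hBm : MeasurableSet Bad := (isOpen_lt hcont.abs continuous_const).measurableSet
  have hBadle : nuM n r Bad ≤ ENNReal.ofReal (c / 2) * V := by
    unfold nuM
    rw [Measure.prod_apply hBm]
    calc _ ≤ ∫⁻ _ in Metric.ball (0 : En n) (2 * r), ENNReal.ofReal (c / 2) := by
          refine lintegral_mono fun v => ?_
          have h1 := remez (tayT p m y v) m (tayT_natDegree p m y v) (8 / c) (by positivity)
          rw [tayT_eval_zero] at h1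
          refine h1.trans (ENNReal.ofReal_le_ofReal (le_of_eq ?_))
          field_simp; norm_num
      _ = _ := by rw [setLIntegral_const]
  have hgood : ENNReal.ofReal (c / 2) * V ≤ nuM n r (setA ω y \ Bad) := by
    have h1 : nuM n r (setA ω y) ≤ nuM n r (setA ω y \ Bad) + nuM n r Bad :=
      (measure_mono (by rw [Set.sdiff_union_self]; exact Set.subset_union_left)).trans
        (measure_union_le _ _)
    have h2 : ENNReal.ofReal c = ENNReal.ofReal (c / 2) + ENNReal.ofReal (c / 2) := by
      rw [← ENNReal.ofReal_add (by positivity) (by positivity)]; congr 1; ring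
    rw [h2, add_mul] at h
    have h3 := (h.trans h1).trans (add_le_add_right hBadle _)
    exact (ENNReal.add_le_add_iff_right (ENNReal.mul_ne_top ENNReal.ofReal_ne_top hVfin)).1 h3
  have hAm := measurableSet_setA ω hω y
  calc ENNReal.ofReal (c / 2 * (etaC c ^ m) ^ 2 * ev p y ^ 2) * V
      = ENNReal.ofReal ((etaC c ^ m * |ev p y|) ^ 2) * (ENNReal.ofReal (c / 2) * V) := by
        rw [← mul_assoc, ← ENNReal.ofReal_mul (by positivity)]
        congr 2
        rw [mul_pow, sq_abs]; ring
    _ ≤ ENNReal.ofReal ((etaC c ^ m * |ev p y|) ^ 2) * nuM n r (setA ω y \ Bad) := by gcongr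
    _ = ∫⁻ _ in setA ω y \ Bad, ENNReal.ofReal ((etaC c ^ m * |ev p y|) ^ 2) ∂(nuM n r) := by
        rw [setLIntegral_const]
    _ ≤ ∫⁻ z in setA ω y \ Bad, ENNReal.ofReal ((tayT p m y z.1).eval z.2 ^ 2) ∂(nuM n r) := by
        refine setLIntegral_mono' (hAm.diff hBm) fun z hz => ENNReal.ofReal_le_ofReal ?_
        have h1 : etaC c ^ m * |ev p y| ≤ |(tayT p m y z.1).eval z.2| := not_lt.1 hz.2
        rw [← sq_abs ((tayT p m y z.1).eval z.2)]
        have := etaC_pos c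
        exact pow_le_pow_left₀ (by positivity) h1 2
    _ ≤ _ := lintegral_mono_set Set.sdiff_subset

/-! ### Integrated estimate -/

lemma GI_sum {n : ℕ} {ι : Type*} (s : Finset ι) (p : ι → MvPolynomial (Fin n) ℝ) :
    GI (∑ i ∈ s, p i) = ∑ i ∈ s, GI (p i) := by
  classical
  induction s using Finset.induction_on with
  | empty => simp [GI, ev]
  | insert a s ha ih => rw [Finset.sum_insert ha, Finset.sum_insert ha, GI_add, ih]

lemma lintegral_ev {n : ℕ} (p : MvPolynomial (Fin n) ℝ) (h : ∀ x : En n, 0 ≤ ev p x) :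
    ∫⁻ x : En n, ENNReal.ofReal (ev p x * wt x) = ENNReal.ofReal (GI p) := by
  unfold GI
  rw [ofReal_integral_eq_lintegral_ofReal (integrable_ev p)]
  exact Filter.Eventually.of_forall fun x => mul_nonneg (h x) (wt_pos x).le

/-- Polynomial version of the remainder control. -/
def remP {n : ℕ} (p : MvPolynomial (Fin n) ℝ) (m N : ℕ) (v : En n) : MvPolynomial (Fin n) ℝ :=
  MvPolynomial.C 2 * ∑ k ∈ Finset.Ico (m + 1) (N + 1),
    MvPolynomial.C (2 ^ k / (k.factorial : ℝ) ^ 2) * ((Dv v)^[k] p) ^ 2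

lemma ev_remP {n : ℕ} (p : MvPolynomial (Fin n) ℝ) (m N : ℕ) (y v : En n) :
    ev (remP p m N v) y = remS p m N y v := by
  unfold remP remS
  rw [ev_mul, ev_C, ev_sum]
  congr 1
  refine Finset.sum_congr rfl fun k _ => ?_
  rw [ev_mul, ev_C, ev_pow]; ring

lemma remS_nonneg {n : ℕ} (p : MvPolynomial (Fin n) ℝ) (m N : ℕ) (y v : En n) :
    0 ≤ remS p m N y v := by
  unfold remS
  exact mul_nonneg (by norm_num) (Finset.sum_nonneg fun k _ => by positivity)

lemma tail_bound (x B : ℝ) (hx : 0 ≤ x) (hB : 1 ≤ B) (m N : ℕ) :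
    ∑ k ∈ Finset.Ico (m + 1) (N + 1), (x ^ k / k.factorial) ^ 2 ≤ (Real.exp (B * x) / B ^ m) ^ 2 := by
  have hB0 : 0 < B := by linarith
  refine (Finset.sum_sq_le_sq_sum_of_nonneg fun k _ => by positivity).trans ?_
  refine pow_le_pow_left₀ (Finset.sum_nonneg fun k _ => by positivity) ?_ 2
  rw [le_div_iff₀ (by positivity), Finset.sum_mul]
  calc _ ≤ ∑ k ∈ Finset.Ico (m + 1) (N + 1), (B * x) ^ k / k.factorial := by
        refine Finset.sum_le_sum fun k hk => ?_
        rw [mul_pow, div_mul_eq_mul_div, mul_comm (B ^ k)]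
        have : B ^ m ≤ B ^ k := pow_le_pow_right₀ hB (by have := (Finset.mem_Ico.1 hk).1; omega)
        gcongr
    _ ≤ ∑ k ∈ Finset.range (N + 1), (B * x) ^ k / k.factorial :=
        Finset.sum_le_sum_of_subset_of_nonneg
          (fun k hk => Finset.mem_range.2 (Finset.mem_Ico.1 hk).2) fun k _ _ => by positivity
    _ ≤ _ := Real.sum_le_exp_of_nonneg (by positivity) _

lemma GI_remP {n : ℕ} (p : MvPolynomial (Fin n) ℝ) (m N : ℕ) (hN : p.totalDegree ≤ N) (v : En n)
    (r B : ℝ) (hB : 1 ≤ B) (hv : ‖v‖ ≤ 2 * r) :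
    GI (remP p m N v) ≤ 2 * (Real.exp (B * (4 * r * Real.sqrt N)) / B ^ m) ^ 2 * GI (p ^ 2) := by
  have hr : 0 ≤ r := by linarith [norm_nonneg v]
  unfold remP
  rw [GI_C_mul, GI_sum, mul_assoc]
  refine mul_le_mul_of_nonneg_left ?_ (by norm_num)
  refine le_trans ?_ (mul_le_mul_of_nonneg_right
    (tail_bound (4 * r * Real.sqrt N) B (by positivity) hB m N) (GI_sq_nonneg p))
  rw [Finset.sum_mul]
  refine Finset.sum_le_sum fun k _ => ?_
  rw [GI_C_mul]
  have h1 := bernstein_iter v N p (Dv_iter_eq_zero p v N hN) k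
  have h2 : (2 * (N : ℝ) * ‖v‖ ^ 2) ^ k ≤ (2 * (N : ℝ) * (2 * r) ^ 2) ^ k := by gcongr
  have h3 := h1.trans (mul_le_mul_of_nonneg_right h2 (GI_sq_nonneg p))
  refine (mul_le_mul_of_nonneg_left h3 (by positivity)).trans (le_of_eq ?_)
  have h4 : (4 * r * Real.sqrt N) ^ 2 = 2 * (2 * (N : ℝ) * (2 * r) ^ 2) := by
    rw [mul_pow, Real.sq_sqrt (by positivity)]; ring
  rw [div_pow, ← pow_mul, mul_comm k 2, pow_mul, h4, mul_pow 2 (2 * (N : ℝ) * (2 * r) ^ 2)]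
  ring

lemma nuM_univ (n : ℕ) (r : ℝ) : nuM n r Set.univ = volume (Metric.ball (0 : En n) (2 * r)) := by
  unfold nuM
  rw [← Set.univ_prod_univ, Measure.prod_prod]
  simp

lemma nuM_ae (n : ℕ) (r : ℝ) :
    ∀ᵐ z ∂(nuM n r), ‖z.1‖ ≤ 2 * r ∧ 0 ≤ z.2 ∧ z.2 ≤ 1 := by
  unfold nuM
  rw [Measure.prod_restrict]
  filter_upwards [ae_restrict_mem (measurableSet_ball.prod measurableSet_Icc)] with z hz
  have h1 := hz.1
  rw [Metric.mem_ball, dist_zero_right] at h1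
  exact ⟨h1.le, hz.2⟩

lemma integrated_est {n : ℕ} (p : MvPolynomial (Fin n) ℝ) (m N : ℕ) (hN : p.totalDegree ≤ N)
    (ω : Set (En n)) (hω : MeasurableSet ω) (ρ₀ r c B : ℝ) (hr : 0 < r) (hρ₀ : 0 ≤ ρ₀)
    (hc : 0 < c) (hB : 1 ≤ B)
    (h : ∀ y : En n, ‖y‖ ≤ ρ₀ →
      ENNReal.ofReal c * volume (Metric.ball (0 : En n) (2 * r)) ≤ nuM n r (setA ω y)) :
    c / 2 * (etaC c ^ m) ^ 2 * ∫ y in Metric.closedBall (0 : En n) ρ₀, ev p y ^ 2 * wt y ≤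
      2 * Real.exp (4 * ρ₀ * r + 4 * r ^ 2) * (∫ y in ω, ev p y ^ 2 * wt y) +
      4 * (Real.exp (B * (4 * r * Real.sqrt N)) / B ^ m) ^ 2 * ∫ y, ev p y ^ 2 * wt y := by
  set V := volume (Metric.ball (0 : En n) (2 * r)) with hV
  have hVfin : V ≠ ∞ := measure_ball_lt_top.ne
  have hV0 : V ≠ 0 := (Metric.measure_ball_pos _ _ (by positivity)).ne'
  set Λ := 4 * ρ₀ * r + 4 * r ^ 2 with hΛ
  set σ := 2 * (Real.exp (B * (4 * r * Real.sqrt N)) / B ^ m) ^ 2 with hσ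
  have hσ0 : 0 ≤ σ := by positivity
  have hIntg : Integrable fun y : En n => ev p y ^ 2 * wt y := by
    refine (integrable_ev (p ^ 2)).congr (Filter.Eventually.of_forall fun y => ?_)
    simp only [ev_pow]
  have hnn : ∀ y : En n, 0 ≤ ev p y ^ 2 * wt y := fun y => mul_nonneg (sq_nonneg _) (wt_pos y).le
  set F : En n → ℝ≥0∞ := fun y => ENNReal.ofReal (ev p y ^ 2 * wt y) with hF
  have hFm : Measurable F :=
    (((ev_continuous p).pow 2).mul wt_continuous).measurable.ennreal_ofReal
  set a := c / 2 * (etaC c ^ m) ^ 2 with ha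
  have ha0 : 0 ≤ a := by positivity
  -- integrand
  set H : En n → En n × ℝ → ℝ≥0∞ := fun y z =>
    ENNReal.ofReal (2 * Real.exp Λ) * ω.indicator F (y + z.2 • z.1) +
      ENNReal.ofReal (2 * (remS p m N y z.1 * wt y)) with hH
  have hpt : ∀ y : En n, ‖y‖ ≤ ρ₀ → ENNReal.ofReal a * V * F y ≤ ∫⁻ z, H y z ∂(nuM n r) := by
    intro y hy
    have h1 := pointwise_est p m ω hω y r c hc (h y hy)
    have h2 : ENNReal.ofReal a * V * F y =
        ENNReal.ofReal (a * ev p y ^ 2) * V * ENNReal.ofReal (wt y) := by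
      simp only [hF]
      rw [ENNReal.ofReal_mul ha0, ENNReal.ofReal_mul (sq_nonneg _)]; ring
    rw [h2]
    refine (mul_le_mul_left h1 _).trans ?_
    rw [← lintegral_mul_const' _ _ ENNReal.ofReal_ne_top,
      ← lintegral_indicator (measurableSet_setA ω hω y)]
    refine lintegral_mono_ae ?_
    filter_upwards [nuM_ae n r] with z hz
    obtain ⟨hz1, hz2, hz3⟩ := hz
    by_cases hzA : z ∈ setA ω y
    · rw [Set.indicator_of_mem hzA, ← ENNReal.ofReal_mul (sq_nonneg _), hH]
      have hzω : y + z.2 • z.1 ∈ ω := hzA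
      simp only [Set.indicator_of_mem hzω, hF]
      rw [← ENNReal.ofReal_mul (by positivity), ← ENNReal.ofReal_add
        (mul_nonneg (by positivity) (hnn _))
        (mul_nonneg (by norm_num) (mul_nonneg (remS_nonneg _ _ _ _ _) (wt_pos y).le))]
      refine ENNReal.ofReal_le_ofReal ?_
      have h3 := taylor_bound p m N hN y z.1 z.2 hz2 hz3
      have h4 : wt y ≤ Real.exp Λ * wt (y + z.2 • z.1) := by
        unfold wt
        rw [← Real.exp_add]
        refine Real.exp_le_exp.2 ?_
        have h5 : ‖y + z.2 • z.1‖ ≤ ‖y‖ + 2 * r := by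
          refine (norm_add_le _ _).trans ?_
          rw [norm_smul, Real.norm_eq_abs, abs_of_nonneg hz2]
          have := mul_le_of_le_one_left (norm_nonneg z.1) hz3
          linarith
        have h6 : ‖y + z.2 • z.1‖ ^ 2 ≤ (‖y‖ + 2 * r) ^ 2 := by gcongr
        have h7 : ‖y‖ * r ≤ ρ₀ * r := by gcongr
        rw [hΛ]
        nlinarith
      have h8 := mul_le_mul_of_nonneg_right h3 (wt_pos y).le
      have h9 := mul_le_mul_of_nonneg_left h4 (sq_nonneg (ev p (y + z.2 • z.1)))
      nlinarith
    · rw [Set.indicator_of_notMem hzA]; exact zero_le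
  have hHm : Measurable (Function.uncurry H) := by
    refine Measurable.add (Measurable.const_mul ?_ _) ?_
    · exact (hFm.indicator hω).comp
        (by fun_prop : Continuous fun z : En n × (En n × ℝ) => z.1 + z.2.2 • z.2.1).measurable
    · exact (continuous_const.mul ((remS_continuous p m N).mul
        (wt_continuous.comp continuous_fst))).measurable.ennreal_ofReal
  have hI : ∫⁻ y, F y = ENNReal.ofReal (GI (p ^ 2)) := by
    rw [← lintegral_ev (p ^ 2) fun x => by rw [ev_pow]; positivity]
    simp only [ev_pow, hF]
  have hinner : ∀ᵐ z ∂(nuM n r), ∫⁻ y, H y z ≤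
      ENNReal.ofReal (2 * Real.exp Λ) * (∫⁻ y in ω, F y) + ENNReal.ofReal (2 * σ * GI (p ^ 2)) := by
    filter_upwards [nuM_ae n r] with z hz
    rw [hH]
    simp only
    rw [lintegral_add_left]
    · refine add_le_add (le_of_eq ?_) ?_
      · rw [lintegral_const_mul' _ _ ENNReal.ofReal_ne_top,
          lintegral_add_right_eq_self (fun y => ω.indicator F y) (z.2 • z.1),
          lintegral_indicator hω]
      · have h1 : ∀ y : En n, ENNReal.ofReal (2 * (remS p m N y z.1 * wt y)) =
            ENNReal.ofReal 2 * ENNReal.ofReal (ev (remP p m N z.1) y * wt y) := by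
          intro y; rw [ENNReal.ofReal_mul (by norm_num), ev_remP]
        simp only [h1]
        rw [lintegral_const_mul' _ _ ENNReal.ofReal_ne_top, lintegral_ev _ (fun x => by
          rw [ev_remP]; exact remS_nonneg _ _ _ _ _), ← ENNReal.ofReal_mul (by norm_num), mul_assoc]
        refine ENNReal.ofReal_le_ofReal (mul_le_mul_of_nonneg_left ?_ (by norm_num))
        exact GI_remP p m N hN z.1 r B hB hz.1
    · refine Measurable.const_mul ((hFm.indicator hω).comp ?_) _
      fun_prop
  have hmain : ENNReal.ofReal a * V * (∫⁻ y in Metric.closedBall (0 : En n) ρ₀, F y) ≤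
      (ENNReal.ofReal (2 * Real.exp Λ) * (∫⁻ y in ω, F y) +
        ENNReal.ofReal (2 * σ * GI (p ^ 2))) * V := by
    calc _ = ∫⁻ y in Metric.closedBall (0 : En n) ρ₀, ENNReal.ofReal a * V * F y := by
          rw [lintegral_const_mul' _ _ (ENNReal.mul_ne_top ENNReal.ofReal_ne_top hVfin)]
      _ ≤ ∫⁻ y in Metric.closedBall (0 : En n) ρ₀, ∫⁻ z, H y z ∂(nuM n r) := by
          refine setLIntegral_mono' measurableSet_closedBall fun y hy => hpt y ?_
          simpa using hy
      _ ≤ ∫⁻ y, ∫⁻ z, H y z ∂(nuM n r) := setLIntegral_le_lintegral _ _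
      _ = ∫⁻ z, (∫⁻ y, H y z) ∂(nuM n r) := by
          have : SFinite (nuM n r) := by unfold nuM; infer_instance
          exact lintegral_lintegral_swap hHm.aemeasurable
      _ ≤ ∫⁻ _, (ENNReal.ofReal (2 * Real.exp Λ) * (∫⁻ y in ω, F y) +
            ENNReal.ofReal (2 * σ * GI (p ^ 2))) ∂(nuM n r) := lintegral_mono_ae hinner
      _ = _ := by rw [lintegral_const, nuM_univ]
  rw [mul_right_comm] at hmain
  have hmain2 := (ENNReal.mul_le_mul_iff_left hV0 hVfin).1 hmain
  have hconv : ∀ s : Set (En n), ∫⁻ y in s, F y = ENNReal.ofReal (∫ y in s, ev p y ^ 2 * wt y) :=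
    fun s => (ofReal_integral_eq_lintegral_ofReal hIntg.integrableOn
      (Filter.Eventually.of_forall hnn)).symm
  have hsnn : ∀ s : Set (En n), 0 ≤ ∫ y in s, ev p y ^ 2 * wt y := fun s =>
    integral_nonneg hnn
  have hG : GI (p ^ 2) = ∫ y : En n, ev p y ^ 2 * wt y := by simp only [GI, ev_pow]
  rw [hconv, hconv, ← ENNReal.ofReal_mul ha0, ← ENNReal.ofReal_mul (by positivity),
    ← ENNReal.ofReal_add (mul_nonneg (by positivity) (hsnn _))
      (mul_nonneg (by positivity) (GI_sq_nonneg p)),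
    ENNReal.ofReal_le_ofReal_iff (add_nonneg (mul_nonneg (by positivity) (hsnn _))
      (mul_nonneg (by positivity) (GI_sq_nonneg p))), hG] at hmain2
  refine hmain2.trans (le_of_eq ?_)
  rw [hσ]; ring

lemma concentration {n : ℕ} (p : MvPolynomial (Fin n) ℝ) (N : ℕ) (hN : p.totalDegree ≤ N)
    (ρ₀ : ℝ) (h0 : 0 ≤ ρ₀) (hρ : 2 * (n * (2 * N + 1)) ≤ ρ₀ ^ 2) (hpos : 0 < ρ₀) :
    ∫ y : En n, ev p y ^ 2 * wt y ≤
      2 * ∫ y in Metric.closedBall (0 : En n) ρ₀, ev p y ^ 2 * wt y := by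
  have hIntg : Integrable fun y : En n => ev p y ^ 2 * wt y := by
    refine (integrable_ev (p ^ 2)).congr (Filter.Eventually.of_forall fun y => ?_)
    simp only [ev_pow]
  have hnn : ∀ y : En n, 0 ≤ ev p y ^ 2 * wt y := fun y => mul_nonneg (sq_nonneg _) (wt_pos y).le
  set Q : MvPolynomial (Fin n) ℝ := ∑ i, (MvPolynomial.X i * p) ^ 2 with hQ
  have hQev : ∀ y : En n, ev Q y = ‖y‖ ^ 2 * ev p y ^ 2 := by
    intro y
    rw [hQ, ev_sum, EuclideanSpace.norm_sq_eq, Finset.sum_mul]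
    refine Finset.sum_congr rfl fun i _ => ?_
    rw [ev_pow, ev_mul, ev_X, mul_pow, Real.norm_eq_abs, sq_abs]
  have hQI : GI Q ≤ n * (2 * N + 1) * GI (p ^ 2) := by
    rw [hQ, GI_sum]
    refine (Finset.sum_le_sum fun i _ => GI_coord p N hN i).trans ?_
    simp [mul_assoc]
  have hG : GI (p ^ 2) = ∫ y : En n, ev p y ^ 2 * wt y := by simp only [GI, ev_pow]
  have hsplit := integral_add_compl (Metric.isClosed_closedBall (x := (0 : En n))
    (ε := ρ₀)).measurableSet hIntg
  have htail : ρ₀ ^ 2 * ∫ y in (Metric.closedBall (0 : En n) ρ₀)ᶜ, ev p y ^ 2 * wt y ≤ GI Q := by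
    rw [← integral_const_mul]
    calc _ ≤ ∫ y in (Metric.closedBall (0 : En n) ρ₀)ᶜ, ev Q y * wt y := by
          refine setIntegral_mono_on (hIntg.const_mul _).integrableOn (integrable_ev Q).integrableOn
            measurableSet_closedBall.compl fun y hy => ?_
          have h1 : ρ₀ < ‖y‖ := by simpa using hy
          rw [hQev, mul_assoc]
          exact mul_le_mul_of_nonneg_right (pow_le_pow_left₀ h0 h1.le 2) (hnn y)
      _ ≤ _ := by
          refine setIntegral_le_integral (integrable_ev Q) (Filter.Eventually.of_forall fun y => ?_)
          simp only [Pi.zero_apply, hQev, mul_assoc]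
          exact mul_nonneg (sq_nonneg _) (hnn y)
  have hI0 := GI_sq_nonneg p
  have h2 : ρ₀ ^ 2 * (2 * ∫ y in (Metric.closedBall (0 : En n) ρ₀)ᶜ, ev p y ^ 2 * wt y) ≤
      ρ₀ ^ 2 * ∫ y : En n, ev p y ^ 2 * wt y := by
    rw [← hG]
    nlinarith
  have h3 := le_of_mul_le_mul_left h2 (by positivity)
  linarith

/-! ### Hermite functions as polynomials times Gaussians -/

lemma iterDeriv_gauss (k : ℕ) : ∃ q : Polynomial ℝ, q.natDegree ≤ k ∧
    ∀ x, iteratedDeriv k (fun y : ℝ => Real.exp (-y ^ 2)) x = q.eval x * Real.exp (-x ^ 2) := by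
  induction k with
  | zero => exact ⟨1, by simp, fun x => by simp⟩
  | succ k ih =>
    obtain ⟨q, hq, h⟩ := ih
    refine ⟨Polynomial.derivative q - Polynomial.C 2 * Polynomial.X * q, ?_, fun x => ?_⟩
    · refine (Polynomial.natDegree_sub_le _ _).trans (max_le ?_ ?_)
      · exact (Polynomial.natDegree_derivative_le q).trans (by omega)
      · refine Polynomial.natDegree_mul_le.trans ?_
        have : (Polynomial.C (2 : ℝ) * Polynomial.X).natDegree ≤ 1 :=
          (Polynomial.natDegree_C_mul_le _ _).trans Polynomial.natDegree_X_le
        omega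
    · rw [iteratedDeriv_succ, funext h]
      have h1 : HasDerivAt (fun y : ℝ => Real.exp (-y ^ 2)) (Real.exp (-x ^ 2) * (-(2 * x))) x := by
        have : HasDerivAt (fun y : ℝ => -y ^ 2) (-(2 * x)) x := by
          have h0 := (hasDerivAt_pow 2 x).neg
          simp only [Nat.cast_ofNat, Nat.add_one_sub_one, pow_one] at h0
          exact h0
        exact this.exp
      have h2 : deriv (fun x => q.eval x * Real.exp (-x ^ 2)) x = _ :=
        ((q.hasDerivAt x).mul h1).deriv
      rw [h2]
      simp
      ring

lemma hermite1_poly (k : ℕ) : ∃ q : Polynomial ℝ, q.natDegree ≤ k ∧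
    ∀ x, hermite1 k x = q.eval x * Real.exp (-(x ^ 2 / 2)) := by
  obtain ⟨q, hq, h⟩ := iterDeriv_gauss k
  refine ⟨Polynomial.C ((-1 : ℝ) ^ k *
    ((2 ^ k * (k.factorial : ℝ) * Real.sqrt Real.pi) ^ (-(1/2 : ℝ)))) * q,
    (Polynomial.natDegree_C_mul_le _ _).trans hq, fun x => ?_⟩
  unfold hermite1
  rw [h, Polynomial.eval_mul, Polynomial.eval_C]
  have : Real.exp (-(x ^ 2 / 2)) = Real.exp (x ^ 2 / 2) * Real.exp (-x ^ 2) := by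
    rw [← Real.exp_add]; congr 1; ring
  rw [this]; ring

/-- Half Gaussian. -/
def hg {n : ℕ} (x : En n) : ℝ := Real.exp (-(‖x‖ ^ 2 / 2))

lemma hg_sq {n : ℕ} (x : En n) : hg x ^ 2 = wt x := by
  unfold hg wt
  rw [← Real.exp_nat_mul]; congr 1; push_cast; ring

lemma aeval_X_totalDegree {n : ℕ} (q : Polynomial ℝ) (j : Fin n) :
    (Polynomial.aeval (MvPolynomial.X j : MvPolynomial (Fin n) ℝ) q).totalDegree ≤ q.natDegree := by
  rw [Polynomial.aeval_eq_sum_range]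
  refine (MvPolynomial.totalDegree_finsetSum _ _).trans (Finset.sup_le fun i hi => ?_)
  refine (MvPolynomial.totalDegree_smul_le _ _).trans ?_
  rw [MvPolynomial.totalDegree_X_pow]
  have := Finset.mem_range.1 hi
  omega

lemma hermiteFun_poly (n : ℕ) (α : Fin n → ℕ) : ∃ p : MvPolynomial (Fin n) ℝ,
    p.totalDegree ≤ ∑ j, α j ∧ ∀ x : En n, hermiteFun n α x = ((ev p x * hg x : ℝ) : ℂ) := by
  choose q hq h using hermite1_poly
  refine ⟨∏ j, Polynomial.aeval (MvPolynomial.X j : MvPolynomial (Fin n) ℝ) (q (α j)), ?_, ?_⟩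
  · refine (MvPolynomial.totalDegree_finsetProd _ _).trans (Finset.sum_le_sum fun j _ => ?_)
    exact (aeval_X_totalDegree _ _).trans (hq _)
  · intro x
    unfold hermiteFun
    rw [← Complex.ofReal_prod]
    congr 1
    simp only [h]
    rw [Finset.prod_mul_distrib]
    congr 1
    · unfold ev
      rw [map_prod]
      refine Finset.prod_congr rfl fun j _ => ?_
      have h3 := Polynomial.aeval_algHom_apply (MvPolynomial.aeval (R := ℝ) (fun i => x i))
        (MvPolynomial.X j : MvPolynomial (Fin n) ℝ) (q (α j))
      rw [MvPolynomial.aeval_X, Polynomial.coe_aeval_eq_eval, MvPolynomial.aeval_eq_eval] at h3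
      exact h3
    · unfold hg
      rw [← Real.exp_sum, EuclideanSpace.norm_sq_eq, Finset.sum_neg_distrib, Finset.sum_div]
      simp

lemma span_poly (n N : ℕ) (f : En n → ℂ) (hf : f ∈ hermiteSpan n N) :
    ∃ p q : MvPolynomial (Fin n) ℝ, p.totalDegree ≤ N ∧ q.totalDegree ≤ N ∧
      ∀ x : En n, f x = ((ev p x : ℂ) + Complex.I * (ev q x : ℂ)) * (hg x : ℂ) := by
  unfold hermiteSpan at hf
  induction hf using Submodule.span_induction with
  | mem g hg =>
    obtain ⟨α, hα, rfl⟩ := hg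
    obtain ⟨p, hp, h⟩ := hermiteFun_poly n α
    exact ⟨p, 0, hp.trans hα, by simp, fun x => by rw [h]; simp [ev]⟩
  | zero => exact ⟨0, 0, by simp, by simp, fun x => by simp [ev]⟩
  | add f g _ _ hf hg =>
    obtain ⟨p, q, hp, hq, h⟩ := hf
    obtain ⟨p', q', hp', hq', h'⟩ := hg
    refine ⟨p + p', q + q', (MvPolynomial.totalDegree_add _ _).trans (max_le hp hp'),
      (MvPolynomial.totalDegree_add _ _).trans (max_le hq hq'), fun x => ?_⟩
    rw [Pi.add_apply, h, h', ev_add, ev_add]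
    push_cast; ring
  | smul c f _ hf =>
    obtain ⟨p, q, hp, hq, h⟩ := hf
    refine ⟨MvPolynomial.C c.re * p + MvPolynomial.C (-c.im) * q,
      MvPolynomial.C c.re * q + MvPolynomial.C c.im * p, ?_, ?_, fun x => ?_⟩
    · refine (MvPolynomial.totalDegree_add _ _).trans (max_le ?_ ?_) <;>
      refine (MvPolynomial.totalDegree_mul _ _).trans ?_ <;> simpa
    · refine (MvPolynomial.totalDegree_add _ _).trans (max_le ?_ ?_) <;>
      refine (MvPolynomial.totalDegree_mul _ _).trans ?_ <;> simpa
    · rw [Pi.smul_apply, h, smul_eq_mul, ev_add, ev_add, ev_mul, ev_mul, ev_mul, ev_mul,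
        ev_C, ev_C, ev_C]
      conv_lhs => rw [← Complex.re_add_im c]
      push_cast
      linear_combination (ev q x * hg x * c.im : ℂ) * Complex.I_sq

lemma norm_sq_span {n : ℕ} (p q : MvPolynomial (Fin n) ℝ) (x : En n) :
    ‖((ev p x : ℂ) + Complex.I * (ev q x : ℂ)) * (hg x : ℂ)‖ ^ 2 =
      ev p x ^ 2 * wt x + ev q x ^ 2 * wt x := by
  rw [norm_mul, mul_pow, Complex.sq_norm, Complex.sq_norm, Complex.normSq_ofReal, mul_comm Complex.I,
    Complex.normSq_add_mul_I, ← hg_sq]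
  ring

/-! ### Assembly -/

lemma jap_bound {n : ℕ} (C N : ℝ) (hC : 0 ≤ C) (hN : 1 ≤ N) (x : En n)
    (hx : ‖x‖ ≤ (C + 1) * Real.sqrt N) : jap n x ≤ (C + 2) * Real.sqrt N := by
  have h1 : 1 ≤ Real.sqrt N := Real.one_le_sqrt.2 hN
  unfold jap
  refine Real.sqrt_le_iff.2 ⟨by positivity, ?_⟩
  have h2 : ‖x‖ ^ 2 ≤ ((C + 1) * Real.sqrt N) ^ 2 := by gcongr
  have h3 : (1 : ℝ) ≤ Real.sqrt N ^ 2 := by nlinarith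
  nlinarith

lemma thick_cond {n : ℕ} (ε Rε γ C : ℝ) (hε0 : 0 < ε) (hε : ε ≤ 1) (hR : 0 < Rε) (hγ : 0 < γ)
    (hC : 0 ≤ C)
    (ρ : En n → ℝ) (hρ : ∀ x, 0 < ρ x) (hρb : ∀ x, ρ x ≤ Rε * jap n x ^ (1 - ε))
    (ω : Set (En n)) (hω : MeasurableSet ω) (hth : ThickWith n γ ρ ω) (N : ℝ) (hN : 1 ≤ N)
    (y : En n) (hy : ‖y‖ ≤ C * Real.sqrt N) :
    ENNReal.ofReal (γ / (5 ^ n * (2 * (1 + Rε * (C + 2))) ^ n)) *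
      volume (Metric.ball (0 : En n) (2 * ((1 + Rε * (C + 2)) * N ^ ((1 - ε) / 2)))) ≤
      volume (ω ∩ Metric.ball y ((1 + Rε * (C + 2)) * N ^ ((1 - ε) / 2))) := by
  set s := N ^ ((1 - ε) / 2) with hs
  set D := 1 + Rε * (C + 2) with hD
  have hD0 : 0 < D := by positivity
  have hs0 : 0 < s := by positivity
  have hsN : s ≤ Real.sqrt N := by
    rw [Real.sqrt_eq_rpow]
    exact Real.rpow_le_rpow_of_exponent_le hN (by linarith)
  have hM : ∀ x ∈ Metric.ball y s, ρ x ≤ Rε * (C + 2) * s := by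
    intro x hx
    have h1 : ‖x‖ ≤ (C + 1) * Real.sqrt N := by
      have h2 : ‖x - y‖ < s := by rwa [← dist_eq_norm]
      have h3 : ‖x‖ ≤ ‖x - y‖ + ‖y‖ := by simpa using norm_add_le (x - y) y
      linarith
    have h2 := jap_bound C N hC hN x h1
    have h3 : jap n x ^ (1 - ε) ≤ ((C + 2) * Real.sqrt N) ^ (1 - ε) :=
      Real.rpow_le_rpow (Real.sqrt_nonneg _) h2 (by linarith)
    have h4 : ((C + 2) * Real.sqrt N) ^ (1 - ε) ≤ (C + 2) * s := by
      rw [Real.mul_rpow (by positivity) (by positivity)]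
      have h5 : Real.sqrt N ^ (1 - ε) = s := by
        rw [Real.sqrt_eq_rpow, ← Real.rpow_mul (by linarith), hs]; congr 1; ring
      rw [h5]
      refine mul_le_mul_of_nonneg_right ?_ hs0.le
      calc (C + 2) ^ (1 - ε) ≤ (C + 2) ^ (1 : ℝ) :=
            Real.rpow_le_rpow_of_exponent_le (by linarith) (by linarith)
        _ = _ := Real.rpow_one _
    calc ρ x ≤ Rε * jap n x ^ (1 - ε) := hρb x
      _ ≤ Rε * ((C + 2) * s) := by gcongr; exact h3.trans h4
      _ = _ := by ring
  have hv := vitali_thick n γ ρ hρ ω hω hth y s _ hM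
  have hr : s + Rε * (C + 2) * s = D * s := by rw [hD]; ring
  rw [hr] at hv
  have hvol : volume (Metric.ball (0 : En n) (2 * (D * s))) =
      ENNReal.ofReal ((2 * D) ^ n) * volume (Metric.ball y s) := by
    rw [Measure.addHaar_ball_of_pos _ _ (by positivity : 0 < 2 * (D * s)),
      Measure.addHaar_ball_of_pos _ y hs0, finrank_euclideanSpace, Fintype.card_fin,
      ← mul_assoc (ENNReal.ofReal ((2 * D) ^ n)), ← ENNReal.ofReal_mul (by positivity)]
    congr 2; ring_nf
  rw [hvol, ← mul_assoc, ← ENNReal.ofReal_mul (by positivity)]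
  have h6 : γ / (5 ^ n * (2 * D) ^ n) * (2 * D) ^ n = (5 ^ n : ℝ)⁻¹ * γ := by
    field_simp
  rw [h6, ENNReal.ofReal_mul (by positivity), mul_assoc]
  refine (mul_le_mul_right hv _).trans (le_of_eq ?_)
  rw [← mul_assoc, ← ENNReal.ofReal_mul (by positivity), inv_mul_cancel₀ (by positivity),
    ENNReal.ofReal_one, one_mul]

/-- Constants. -/
def bigB (c : ℝ) : ℝ := Real.exp 1 / etaC c * (32 / c)

lemma bigB_ge (c : ℝ) (hc : 0 < c) (hc1 : c ≤ 1) : 1 ≤ bigB c := by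
  unfold bigB
  have h1 : 1 ≤ Real.exp 1 / etaC c := by
    rw [le_div_iff₀ (etaC_pos c), one_mul]
    exact (etaC_le_one c hc).trans (Real.one_le_exp (by norm_num))
  have h2 : 1 ≤ 32 / c := by rw [le_div_iff₀ hc]; linarith
  nlinarith

lemma alg_step {n : ℕ} (p : MvPolynomial (Fin n) ℝ) (N : ℕ) (hN : p.totalDegree ≤ N)
    (ω : Set (En n)) (hω : MeasurableSet ω) (ρ₀ r c : ℝ) (hr : 0 < r) (hρ₀ : 0 < ρ₀)
    (hρ : 2 * (n * (2 * N + 1)) ≤ ρ₀ ^ 2)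
    (hc : 0 < c) (hc1 : c ≤ 1)
    (h : ∀ y : En n, ‖y‖ ≤ ρ₀ →
      ENNReal.ofReal c * volume (Metric.ball (0 : En n) (2 * r)) ≤ nuM n r (setA ω y)) :
    ∫ y, ev p y ^ 2 * wt y ≤ 16 / c *
      Real.exp (2 * Real.log (etaC c)⁻¹ * (bigB c * (4 * r * Real.sqrt N) + 2) +
        (4 * ρ₀ * r + 4 * r ^ 2)) * ∫ y in ω, ev p y ^ 2 * wt y := by
  have hB := bigB_ge c hc hc1
  set B := bigB c with hBdef
  set x := 4 * r * Real.sqrt N with hx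
  have hx0 : 0 ≤ x := by positivity
  set m := ⌈B * x⌉₊ + 1 with hm
  have hm1 : B * x ≤ m := by
    rw [hm]; push_cast; linarith [Nat.le_ceil (B * x)]
  have hm2 : (m : ℝ) ≤ B * x + 2 := by
    rw [hm]; push_cast; linarith [Nat.ceil_lt_add_one (by positivity : 0 ≤ B * x)]
  have hIntg := integrated_est p m N hN ω hω ρ₀ r c B hr hρ₀.le hc hB h
  have hcon := concentration p N hN ρ₀ hρ₀.le hρ hρ₀
  set I := ∫ y, ev p y ^ 2 * wt y with hI
  set J := ∫ y in Metric.closedBall (0 : En n) ρ₀, ev p y ^ 2 * wt y with hJ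
  set W := ∫ y in ω, ev p y ^ 2 * wt y with hW
  have hnn : ∀ y : En n, 0 ≤ ev p y ^ 2 * wt y := fun y => mul_nonneg (sq_nonneg _) (wt_pos y).le
  have hI0 : 0 ≤ I := integral_nonneg hnn
  have hW0 : 0 ≤ W := integral_nonneg hnn
  set η := etaC c with hη
  have hη0 : 0 < η := etaC_pos c
  have hη1 : η ≤ 1 := etaC_le_one c hc
  have hB0 : 0 < B := by linarith
  -- tail
  have ht : (Real.exp (B * x) / B ^ m) ^ 2 ≤ (c / 32) * (η ^ m) ^ 2 := by
    have h1 : Real.exp (B * x) / B ^ m ≤ (c / 32) ^ m * η ^ m := by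
      rw [div_le_iff₀ (by positivity)]
      calc Real.exp (B * x) ≤ Real.exp m := Real.exp_le_exp.2 hm1
        _ = Real.exp 1 ^ m := by rw [← Real.exp_nat_mul, mul_one]
        _ = ((c / 32) * η * B) ^ m := by
            congr 1
            rw [hBdef, bigB, ← hη]; field_simp
        _ = _ := by rw [mul_pow, mul_pow]
    have h2 : (Real.exp (B * x) / B ^ m) ^ 2 ≤ ((c / 32) ^ m * η ^ m) ^ 2 := by gcongr
    refine h2.trans ?_
    rw [mul_pow]
    refine mul_le_mul_of_nonneg_right ?_ (by positivity)
    rw [← pow_mul]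
    exact pow_le_of_le_one (by positivity) (by linarith) (by rw [hm]; omega)
  have hη2 : 0 < (η ^ m) ^ 2 := by positivity
  set E := Real.exp (4 * ρ₀ * r + 4 * r ^ 2) with hE
  have hkey : (η ^ m) ^ 2 * I ≤ 16 / c * E * W := by
    have h3 : c / 2 * (η ^ m) ^ 2 * I ≤ 2 * (2 * E * W + 4 * (c / 32 * (η ^ m) ^ 2) * I) := by
      have h4 : c / 2 * (η ^ m) ^ 2 * I ≤ c / 2 * (η ^ m) ^ 2 * (2 * J) := by gcongr
      have h5 := mul_le_mul_of_nonneg_right ht hI0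
      nlinarith
    have h6 : c * ((η ^ m) ^ 2 * I) ≤ 16 * E * W := by nlinarith
    have h7 : 16 / c * E * W = (16 * E * W) / c := by ring
    rw [h7, le_div_iff₀ hc]
    linarith
  have hfin : I ≤ (η⁻¹ ^ m) ^ 2 * (16 / c * E * W) := by
    have h8 := mul_le_mul_of_nonneg_left hkey (by positivity : 0 ≤ (η⁻¹ ^ m) ^ 2)
    have h9 : (η⁻¹ ^ m) ^ 2 * ((η ^ m) ^ 2 * I) = I := by
      rw [← mul_assoc, ← mul_pow, ← mul_pow, inv_mul_cancel₀ hη0.ne']; simp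
    linarith
  have hL : 0 ≤ Real.log η⁻¹ := Real.log_nonneg ((one_le_inv₀ hη0).2 hη1)
  have hexp : (η⁻¹ ^ m) ^ 2 ≤ Real.exp (2 * Real.log η⁻¹ * (B * x + 2)) := by
    have h10 : (η⁻¹ ^ m) ^ 2 = Real.exp (2 * Real.log η⁻¹ * m) := by
      rw [mul_comm, mul_comm 2, ← mul_assoc, Real.exp_mul, Real.exp_nat_mul,
        Real.exp_log (by positivity)]
      norm_cast
    rw [h10]
    exact Real.exp_le_exp.2 (by gcongr)
  rw [Real.exp_add, ← hE]
  calc I ≤ (η⁻¹ ^ m) ^ 2 * (16 / c * E * W) := hfin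
    _ ≤ Real.exp (2 * Real.log η⁻¹ * (B * x + 2)) * (16 / c * E * W) := by gcongr
    _ = _ := by ring

lemma poly_final (n : ℕ) (ε Rε γ : ℝ) (hε0 : 0 < ε) (hε : ε ≤ 1) (hR : 0 < Rε) (hγ : 0 < γ)
    (hγ1 : γ ≤ 1) : ∃ K A : ℝ, 0 < K ∧ 0 < A ∧
      ∀ ρ : En n → ℝ, (∀ x, 0 < ρ x) → (∀ x, ρ x ≤ Rε * jap n x ^ (1 - ε)) →
        ∀ ω : Set (En n), MeasurableSet ω → ThickWith n γ ρ ω →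
          ∀ N : ℕ, 1 ≤ N → ∀ p : MvPolynomial (Fin n) ℝ, p.totalDegree ≤ N →
            ∫ y, ev p y ^ 2 * wt y ≤
              K * Real.exp (A * (N : ℝ) ^ (1 - ε / 2)) * ∫ y in ω, ev p y ^ 2 * wt y := by
  set C : ℝ := 6 * (n + 1) with hC
  have hC0 : 0 < C := by positivity
  set D : ℝ := 1 + Rε * (C + 2) with hD
  have hD0 : 0 < D := by positivity
  have hD1 : 1 ≤ D := by
    have : 0 < Rε * (C + 2) := by positivity
    linarith
  set c1 := γ / (5 ^ n * (2 * D) ^ n) with hc1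
  have hc1p : 0 < c1 := by positivity
  have hc1le : c1 ≤ 1 := by
    rw [hc1, div_le_one (by positivity)]
    have h1 : (1 : ℝ) ≤ 5 ^ n := one_le_pow₀ (by norm_num)
    have h2 : (1 : ℝ) ≤ (2 * D) ^ n := one_le_pow₀ (by linarith)
    nlinarith
  set c := c1 / 2 with hc
  have hcp : 0 < c := by positivity
  have hcle : c ≤ 1 := by linarith
  set L := Real.log (etaC c)⁻¹ with hL
  have hL0 : 0 ≤ L := Real.log_nonneg ((one_le_inv₀ (etaC_pos c)).2 (etaC_le_one c hcp))
  have hB := bigB_ge c hcp hcle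
  set B := bigB c with hBdef
  refine ⟨16 / c * Real.exp (4 * L), 8 * L * B * D + 4 * C * D + 4 * D ^ 2, by positivity,
    by positivity, ?_⟩
  intro ρ hρ hρb ω hω hth N hN p hp
  have hNR : (1 : ℝ) ≤ N := by exact_mod_cast hN
  set s := (N : ℝ) ^ ((1 - ε) / 2) with hs
  set T := (N : ℝ) ^ (1 - ε / 2) with hT
  have hs0 : 0 < s := by positivity
  have hsN : s ≤ Real.sqrt N := by
    rw [Real.sqrt_eq_rpow]
    exact Real.rpow_le_rpow_of_exponent_le hNR (by linarith)
  have hsT : s * Real.sqrt N = T := by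
    rw [Real.sqrt_eq_rpow, hs, hT, ← Real.rpow_add (by linarith)]; congr 1; ring
  have hss : s ^ 2 ≤ T := by rw [← hsT, sq]; gcongr
  have hsq : Real.sqrt N ^ 2 = N := Real.sq_sqrt (by positivity)
  have h1 := alg_step p N hp ω hω (C * Real.sqrt N) (D * s) c (by positivity) (by positivity)
    (by
      rw [mul_pow, hsq, hC]
      have hn0 : (0 : ℝ) ≤ n := by positivity
      have : (n : ℝ) ≤ n * N := le_mul_of_one_le_right hn0 hNR
      nlinarith [mul_nonneg hn0 (by linarith : (0 : ℝ) ≤ N),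
        mul_nonneg (mul_nonneg hn0 hn0) (by linarith : (0 : ℝ) ≤ N)])
    hcp hcle
    (fun y hy => setA_measure ω hω y (D * s) c1 hc1p
      (thick_cond ε Rε γ C hε0 hε hR hγ hC0.le ρ hρ hρb ω hω hth N hNR y hy))
  have hW0 : 0 ≤ ∫ y in ω, ev p y ^ 2 * wt y :=
    integral_nonneg fun y => mul_nonneg (sq_nonneg _) (wt_pos y).le
  refine h1.trans (mul_le_mul_of_nonneg_right ?_ hW0)
  rw [mul_assoc (16 / c), ← Real.exp_add]
  refine mul_le_mul_of_nonneg_left (Real.exp_le_exp.2 ?_) (by positivity)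
  have e1 : 2 * L * (B * (4 * (D * s) * Real.sqrt N) + 2) = 8 * L * B * D * T + 4 * L := by
    rw [← hsT]; ring
  have e2 : 4 * (C * Real.sqrt N) * (D * s) = 4 * C * D * T := by rw [← hsT]; ring
  have e3 : 4 * (D * s) ^ 2 ≤ 4 * D ^ 2 * T := by
    rw [mul_pow, ← mul_assoc]; gcongr
  rw [e1, e2]
  linarith

/-- **Corollary "Spectral2"**: spectral inequality for continuous densities
ρ ≤ R_ε⟨x⟩^{1-ε} (with R_ε ≤ 1/(2(1-ε)) when ε < 1) and thickness parameter
1 - 6^{-n} < γ ≤ 1. -/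
theorem spectral_inequality_hermite_continuous_density (n : ℕ) :
    ∃ κt : ℝ, 1 < κt ∧
      ∀ ε Rε γ : ℝ, 0 < ε → ε ≤ 1 → 0 < Rε → (ε < 1 → Rε ≤ 1 / (2 * (1 - ε))) →
        1 - 1 / 6 ^ n < γ → γ ≤ 1 →
        ∃ κ Ct : ℝ, 0 < κ ∧ 0 < Ct ∧
          ∀ ρ : En n → ℝ, Continuous ρ → (∀ x, 0 < ρ x) →
            (∀ x, ρ x ≤ Rε * jap n x ^ (1 - ε)) →
            ∀ ω : Set (En n), MeasurableSet ω → ThickWith n γ ρ ω →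
              ∀ N : ℕ, 1 ≤ N → ∀ f ∈ hermiteSpan n N,
                L2norm n f ≤ κ * (κt / γ) ^ (Ct * (N : ℝ) ^ (1 - ε / 2)) *
                  L2normOn n ω f := by
  refine ⟨Real.exp 1, Real.one_lt_exp_iff.2 one_pos, ?_⟩
  intro ε Rε γ hε0 hε hR _ hγ hγ1
  have hγ0 : 0 < γ := by
    refine lt_of_le_of_lt ?_ hγ
    have : (1 : ℝ) / 6 ^ n ≤ 1 := by
      rw [div_le_one (by positivity)]; exact one_le_pow₀ (by norm_num)
    linarith
  obtain ⟨K, A, hK, hA, hmain⟩ := poly_final n ε Rε γ hε0 hε hR hγ0 hγ1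
  refine ⟨Real.sqrt K, A / 2, Real.sqrt_pos.2 hK, by positivity, ?_⟩
  intro ρ _ hρ hρb ω hω hth N hN f hf
  obtain ⟨p, q, hp, hq, hfx⟩ := span_poly n N f hf
  have hIntg : ∀ p : MvPolynomial (Fin n) ℝ, Integrable fun y : En n => ev p y ^ 2 * wt y := by
    intro p
    refine (integrable_ev (p ^ 2)).congr (Filter.Eventually.of_forall fun y => ?_)
    simp only [ev_pow]
  have h1 := hmain ρ hρ hρb ω hω hth N hN p hp
  have h2 := hmain ρ hρ hρb ω hω hth N hN q hq
  set T := (N : ℝ) ^ (1 - ε / 2) with hT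
  have hT0 : 0 ≤ T := by positivity
  have hnf : ∀ x, ‖f x‖ ^ 2 = ev p x ^ 2 * wt x + ev q x ^ 2 * wt x := fun x => by
    rw [hfx, norm_sq_span]
  have h3 : ∫ x, ‖f x‖ ^ 2 ≤ K * Real.exp (A * T) * ∫ x in ω, ‖f x‖ ^ 2 := by
    simp only [hnf]
    rw [integral_add (hIntg p) (hIntg q),
      integral_add (hIntg p).integrableOn (hIntg q).integrableOn, mul_add]
    exact add_le_add h1 h2
  have h4 : Real.exp (A / 2 * T) ≤ (Real.exp 1 / γ) ^ (A / 2 * T) := by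
    rw [← Real.exp_one_rpow (A / 2 * T)]
    refine Real.rpow_le_rpow (Real.exp_pos 1).le ?_ (by positivity)
    rw [le_div_iff₀ hγ0]
    exact mul_le_of_le_one_right (Real.exp_pos 1).le hγ1
  unfold L2norm L2normOn
  calc Real.sqrt (∫ x, ‖f x‖ ^ 2) ≤ Real.sqrt (K * Real.exp (A * T) * ∫ x in ω, ‖f x‖ ^ 2) :=
        Real.sqrt_le_sqrt h3
    _ = Real.sqrt K * Real.exp (A / 2 * T) * Real.sqrt (∫ x in ω, ‖f x‖ ^ 2) := by
        rw [Real.sqrt_mul (by positivity), Real.sqrt_mul hK.le]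
        congr 2
        rw [show A * T = A / 2 * T + A / 2 * T by ring, Real.exp_add,
          Real.sqrt_mul_self (Real.exp_pos _).le]
    _ ≤ _ := by gcongr

end
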